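/- Let γ > 0, 1 < α < 2, p > 1, a > 0, b > 0, and let f be locally integrable on [0,∞). Suppose w ∈ C¹([0,∞)), w ≢ 0, the function t ↦ ₀I_t^{2−α}(w(s) − w'(0)s − w(0)) is in AC²([0,T]) for every T > 0, and for almost every t ≥ 0 one has (₀D_t^α w)(t) + a·w(t) = (₀I_t^γ f)(t) and f(t) ≥ b·|w(t)|^p. Assume 0 < γ < α/2, α + γ ≤ 2, and w'(0) > 0. Then for every β satisfying α/2 ≤ γ + β < 1 and 0 < β < α, one has liminf_{t→+∞} t^{α−β−1}·(₀I_t^β w)(t) > 0. -/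

import Mathlib

/-!
Write `k_σ(t) = t^{σ-1} / Γ(σ)` and `⋆` for convolution on `(0, ∞)`, so that `₀I_t^σ u = k_σ ⋆ u`.
The Mittag-Leffler kernels `r_μ(t) = t^{μ-1} E_{α,μ}(-a t^α)` satisfy `r_σ ⋆ k_τ = r_{σ+τ}` and
`r_μ + a r_{μ+α} = k_μ`. With `v(s) = w(s) - w'(0) s - w(0)`, the equation integrated twice reads
`k_{2-α} ⋆ v = k_2 ⋆ (k_γ ⋆ f - a w)`, because the left-hand side vanishes to first order at `0`.
Convolving with `r_{α+β-1}` and cancelling one integration gives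
`r_β ⋆ v = r_{α+β} ⋆ (k_γ ⋆ f - a w)`, that is,
`₀I_t^β w = w'(0) r_{2+β} + w(0) r_{1+β} + r_{α+β+γ} ⋆ f`.
Since `f ≥ 0` and `r_{α+β+γ} ≥ 0`, the last term can be dropped, and
`t^{α-β-1} (w'(0) r_{2+β}(t) + w(0) r_{1+β}(t))` tends to `w'(0) / (a Γ(2+β-α)) > 0`.

This uses two facts on `E_{α,μ}(-x)` for `x > 0` and `1 < α < 2`: it is nonnegative for
`μ ≥ 3α/2` (applicable because `β + γ ≥ α/2`), and `x E_{α,μ}(-x)` tends to `1/Γ(μ-α)` as `x → ∞`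
for every real `μ`. By the functional equation `E_{α,μ}(-x) + x E_{α,μ+α}(-x) = 1/Γ(μ)` the first
follows from `|E_{α,μ}(-x)| ≤ 1/Γ(μ)` for `μ ≥ α/2`, the second from the boundedness of
`E_{α,μ}(-x)` for all `μ`.

The bound `1/Γ(μ)` is proved by discretization. In the Laplace variable `s`, the claim for `μ = α/2`
concerns `s^{α/2} / (s^α + a)`, half the sum of `1 / (s^{α/2} ± i√a)`. With `s` replaced by `1 - q`
and `ν = α/2 ≤ 1`, the power series `1 - (1-q)^ν` has nonnegative coefficients, which makes
`1 / ((1-q)^ν ± iδ)` majorized by `(1-q)^{-ν}`. The coefficients of `(1-q)^{-s}`, suitably scaled,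
tend to `1/Γ(s)` by Euler's product, and the bound passes to the limit. The same argument bounds the
Prabhakar functions `E^i_{α,μ}(-x)` for `μ ≥ iα/2`; a recursion in `(i, μ)` then yields the
boundedness of `E_{α,μ}(-x)` for all real `μ`, the gap `α < 2` being what makes the recursion
terminate.
-/

open MeasureTheory Filter

/-- Riemann–Liouville fractional integral of order `σ` based at `0`:
`(₀I_t^σ f)(t) = (1/Γ(σ)) ∫₀ᵗ (t−s)^{σ−1} f(s) ds`. -/
noncomputable def rlInt (σ : ℝ) (f : ℝ → ℝ) (t : ℝ) : ℝ :=
  (1 / Real.Gamma σ) * ∫ s in (0:ℝ)..t, (t - s) ^ (σ - 1) * f s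

/-- The function whose second derivative is the (left) Caputo derivative of order `α ∈ (1,2]`:
for `α < 2` it is `₀I_t^{2−α}(w(s) − w'(0)·s − w(0))`, and for `α = 2` it is `w` itself. -/
noncomputable def capKernel (α : ℝ) (w : ℝ → ℝ) : ℝ → ℝ :=
  if α = 2 then w else rlInt (2 - α) (fun s => w s - deriv w 0 * s - w 0)

/-- Left Caputo fractional derivative of order `α ∈ (1,2]`:
`(₀D_t^α w)(t) = (d²/dt²)[ ₀I_t^{2−α}(w(s) − w'(0)s − w(0)) ](t)` (second derivative of `w` when `α = 2`). -/
noncomputable def caputoD (α : ℝ) (w : ℝ → ℝ) : ℝ → ℝ :=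
  deriv (deriv (capKernel α w))

/-- `g ∈ AC²([0,T])`: `g` is differentiable on `[0,T]`, its second derivative is integrable,
and `g'` is the integral of `g''` (i.e. `g'` is absolutely continuous). -/
def AC2On (g : ℝ → ℝ) (T : ℝ) : Prop :=
  (∀ t ∈ Set.Icc (0:ℝ) T, DifferentiableAt ℝ g t) ∧
  IntervalIntegrable (deriv (deriv g)) volume 0 T ∧
  ∀ t ∈ Set.Icc (0:ℝ) T, deriv g t = deriv g 0 + ∫ s in (0:ℝ)..t, deriv (deriv g) s

/-! ### Majorant power series -/

section Majorant

open PowerSeries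

/-- Majorization of formal power series, usually written `A ≪ B`: the norms of the coefficients of
`A` are at most the coefficients of `B`. -/
def MajorizedBy {R : Type*} [NormedRing R] (A : PowerSeries R) (B : PowerSeries ℝ) : Prop :=
  ∀ n, ‖coeff n A‖ ≤ coeff n B

namespace MajorizedBy

variable {R : Type*} [NormedRing R] {A A' : PowerSeries R} {B B' : PowerSeries ℝ}

lemma add (h : MajorizedBy A B) (h' : MajorizedBy A' B') : MajorizedBy (A + A') (B + B') :=
  fun n => by simpa only [map_add] using (norm_add_le _ _).trans (add_le_add (h n) (h' n))

lemma mul (h : MajorizedBy A B) (h' : MajorizedBy A' B') : MajorizedBy (A * A') (B * B') :=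
  fun n => by
    rw [coeff_mul, coeff_mul]
    refine (norm_sum_le _ _).trans (Finset.sum_le_sum fun x _ => (norm_mul_le _ _).trans ?_)
    exact mul_le_mul (h x.1) (h' x.2) (norm_nonneg _) ((norm_nonneg _).trans (h x.1))

lemma one [NormOneClass R] : MajorizedBy (1 : PowerSeries R) 1 := fun n => by
  rw [coeff_one, coeff_one]
  split_ifs <;> simp

lemma pow [NormOneClass R] (h : MajorizedBy A B) (i : ℕ) : MajorizedBy (A ^ i) (B ^ i) := by
  induction i with
  | zero => simpa only [pow_zero] using one
  | succ i ih => simpa only [pow_succ] using ih.mul h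

lemma inv {K : Type*} [NormedField K] {A : PowerSeries K} (h₀ : 0 < constantCoeff B)
    (h₀' : constantCoeff B ≤ ‖constantCoeff A‖) (h : ∀ n ≠ 0, ‖coeff n A‖ ≤ -coeff n B) :
    MajorizedBy A⁻¹ B⁻¹ := fun n => by
  have h_inv : ‖(constantCoeff A)⁻¹‖ ≤ (constantCoeff B)⁻¹ := by
    rw [norm_inv]
    exact inv_anti₀ h₀ h₀'
  induction n using Nat.strong_induction_on with
  | _ n ih =>
    rw [coeff_inv, coeff_inv]
    split_ifs with hn
    · exact h_inv
    · rw [neg_mul, norm_neg, norm_mul, neg_mul, ← mul_neg, ← Finset.sum_neg_distrib]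
      refine mul_le_mul h_inv ?_ (norm_nonneg _) (inv_nonneg.2 h₀.le)
      refine (norm_sum_le _ _).trans (Finset.sum_le_sum fun x hx => ?_)
      split_ifs with hxn
      · have hx₁ : x.1 ≠ 0 := by
          have := Finset.HasAntidiagonal.mem_antidiagonal.1 hx
          omega
        rw [norm_mul, ← neg_mul]
        exact mul_le_mul (h _ hx₁) (ih _ hxn) (norm_nonneg _) ((norm_nonneg _).trans (h _ hx₁))
      · simp

end MajorizedBy

lemma majorizedBy_self {B : PowerSeries ℝ} (hB : ∀ n, 0 ≤ coeff n B) : MajorizedBy B B :=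
  fun n => (Real.norm_of_nonneg (hB n)).le

lemma majorizedBy_map_ofReal_iff {A B : PowerSeries ℝ} :
    MajorizedBy (PowerSeries.map Complex.ofRealHom A) B ↔ MajorizedBy A B := by
  simp only [MajorizedBy, coeff_map, Complex.ofRealHom_eq_coe, Complex.norm_real]

lemma constantCoeff_map_ofReal (y : PowerSeries ℝ) :
    constantCoeff (PowerSeries.map Complex.ofRealHom y) = ((constantCoeff y : ℝ) : ℂ) := by
  rw [← coeff_zero_eq_constantCoeff_apply, coeff_map, coeff_zero_eq_constantCoeff_apply,
    Complex.ofRealHom_eq_coe]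

lemma majorizedBy_inv_add_C {y : PowerSeries ℝ} (hy₀ : 0 < constantCoeff y)
    (hy : ∀ n ≠ 0, coeff n y ≤ 0) {z : ℂ} (hz : z.re = 0) :
    MajorizedBy (PowerSeries.map Complex.ofRealHom y + C z)⁻¹ y⁻¹ := by
  refine .inv hy₀ ?_ fun n hn => ?_
  · refine (le_abs_self _).trans (le_of_eq_of_le ?_ (Complex.abs_re_le_norm _))
    simp [constantCoeff_map_ofReal, hz]
  · rw [map_add, coeff_C, if_neg hn, add_zero, coeff_map, Complex.ofRealHom_eq_coe,
      Complex.norm_real, Real.norm_eq_abs, abs_of_nonpos (hy n hn)]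

/-- This is the partial fraction decomposition
`2 y / (y² + ε) = 1 / (y + i√ε) + 1 / (y - i√ε)`. -/
lemma majorizedBy_mul_inv_sq_add_C {y : PowerSeries ℝ} (hy₀ : 0 < constantCoeff y)
    (hy : ∀ n ≠ 0, coeff n y ≤ 0) {ε : ℝ} (hε : 0 ≤ ε) :
    MajorizedBy (y * (y ^ 2 + C ε)⁻¹) y⁻¹ := by
  have two_mul_iff (A B : PowerSeries ℝ) : MajorizedBy (A + A) (B + B) ↔ MajorizedBy A B := by
    simp only [MajorizedBy, map_add]
    refine forall_congr' fun n => ?_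
    rw [← two_mul, ← two_mul, norm_mul, Real.norm_ofNat, mul_le_mul_iff_of_pos_left two_pos]
  have ne_zero {z : ℂ} (hz : z.re = 0) :
      constantCoeff (PowerSeries.map Complex.ofRealHom y + C z) ≠ 0 := fun h => by
    have := congrArg Complex.re h
    simp [constantCoeff_map_ofReal, hz, hy₀.ne'] at this
  have ne_zero' : constantCoeff (y ^ 2 + C ε) ≠ 0 := by
    rw [map_add, map_pow, constantCoeff_C]
    positivity
  set Y := PowerSeries.map Complex.ofRealHom y
  set z : ℂ := Real.sqrt ε * Complex.I
  have hz : z.re = 0 := by simp [z]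
  have hz' : (-z).re = 0 := by simp [z]
  have hzz : z * z = -(ε : ℂ) := by
    rw [mul_mul_mul_comm, Complex.I_mul_I, ← Complex.ofReal_mul, Real.mul_self_sqrt hε, mul_neg_one]
  have partial_fractions :
      PowerSeries.map Complex.ofRealHom (y * (y ^ 2 + C ε)⁻¹ + y * (y ^ 2 + C ε)⁻¹)
        = (Y + C z)⁻¹ + (Y + C (-z))⁻¹ := by
    have h₁ := PowerSeries.mul_inv_cancel _ (ne_zero hz)
    have h₂ := PowerSeries.mul_inv_cancel _ (ne_zero hz')
    have h₃ := congrArg (PowerSeries.map Complex.ofRealHom) (PowerSeries.mul_inv_cancel _ ne_zero')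
    set P := (Y + C z)⁻¹
    set Q := (Y + C (-z))⁻¹
    set G := PowerSeries.map Complex.ofRealHom (y ^ 2 + C ε)⁻¹ with hG
    have hC : C (R := ℂ) ε = -(C z * C z) := by rw [← map_mul, hzz, map_neg, neg_neg]
    simp only [map_add, map_mul, map_pow, map_C, map_one, map_neg, Complex.ofRealHom_eq_coe, hC,
      ← hG] at h₁ h₂ h₃ ⊢
    linear_combination (P + Q) * h₃ - (Y - C z) * G * h₁ - (Y + C z) * G * h₂
  rw [← two_mul_iff, ← majorizedBy_map_ofReal_iff, partial_fractions]
  exact (majorizedBy_inv_add_C hy₀ hy hz).add (majorizedBy_inv_add_C hy₀ hy hz')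

end Majorant

/-! ### The binomial series `(1 - X)^{-s}` -/

section BinomialSeries

open PowerSeries

lemma multichoose_eq_prod_div (s : ℝ) (n : ℕ) :
    Ring.multichoose s n = (∏ j ∈ Finset.range n, (s + j)) / n.factorial := by
  have eval_eq_prod : (ascPochhammer ℝ n).eval s = ∏ j ∈ Finset.range n, (s + j) := by
    induction n with
    | zero => simp
    | succ n ih => rw [ascPochhammer_succ_eval, Finset.prod_range_succ, ih]
  rw [eq_div_iff (by positivity), mul_comm, ← nsmul_eq_mul,
    Ring.factorial_nsmul_multichoose_eq_ascPochhammer, Polynomial.ascPochhammer_smeval_eq_eval,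
    eval_eq_prod]

lemma multichoose_succ (s : ℝ) (n : ℕ) :
    Ring.multichoose s (n + 1) = Ring.multichoose s n * ((s + n) / (n + 1)) := by
  rw [multichoose_eq_prod_div, multichoose_eq_prod_div, Finset.prod_range_succ, Nat.factorial_succ,
    div_mul_div_comm, Nat.cast_mul, Nat.cast_succ, mul_comm (n.factorial : ℝ)]

lemma multichoose_nonneg {s : ℝ} (hs : 0 ≤ s) (n : ℕ) : 0 ≤ Ring.multichoose s n := by
  rw [multichoose_eq_prod_div]
  positivity

lemma multichoose_neg_nonpos {s : ℝ} (hs₀ : 0 ≤ s) (hs₁ : s ≤ 1) {n : ℕ} (hn : n ≠ 0) :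
    Ring.multichoose (-s) n ≤ 0 := by
  obtain ⟨n, rfl⟩ := Nat.exists_eq_succ_of_ne_zero hn
  rw [multichoose_eq_prod_div, Finset.prod_range_succ', Nat.cast_zero, add_zero]
  refine div_nonpos_of_nonpos_of_nonneg ?_ (by positivity)
  refine mul_nonpos_of_nonneg_of_nonpos (Finset.prod_nonneg fun j _ => ?_) (by linarith)
  push_cast
  linarith [(Nat.cast_nonneg j : (0 : ℝ) ≤ j)]

lemma multichoose_le_pow {s : ℝ} (hs : 0 ≤ s) (n : ℕ) : Ring.multichoose s n ≤ (s + n) ^ n := by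
  rw [multichoose_eq_prod_div]
  calc (∏ j ∈ Finset.range n, (s + j)) / n.factorial
      ≤ ∏ j ∈ Finset.range n, (s + j) :=
        div_le_self (by positivity) (Nat.one_le_cast.2 n.factorial_pos)
    _ ≤ ∏ _j ∈ Finset.range n, (s + n) :=
        Finset.prod_le_prod (fun j _ => by positivity) fun j hj =>
          add_le_add_right (Nat.cast_le.2 (Finset.mem_range.1 hj).le) s
    _ = (s + n) ^ n := by rw [Finset.prod_const, Finset.card_range]

lemma multichoose_add_le {s α : ℝ} (hs : 0 < s) (hα : 1 ≤ α) (n : ℕ) :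
    Ring.multichoose (s + α) n ≤ Ring.multichoose s n * ((s + n) / s) ^ α := by
  induction n with
  | zero => simp [hs.ne']
  | succ n ih =>
    have bernoulli : 1 + α * (1 / (s + n)) ≤ (1 + 1 / (s + n)) ^ α :=
      one_add_mul_self_le_rpow_one_add (neg_one_lt_zero.le.trans (by positivity)) hα
    have factor : (s + α + n) / ((n : ℝ) + 1) = (s + n) / (n + 1) * (1 + α * (1 / (s + n))) := by
      field_simp
      ring
    have merge : ((s + n) / s) ^ α * (1 + 1 / (s + n)) ^ α = ((s + (n + 1 : ℕ)) / s) ^ α := by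
      rw [← Real.mul_rpow (by positivity) (by positivity)]
      congr 1
      push_cast
      field_simp
      ring
    have := multichoose_nonneg hs.le n
    rw [multichoose_succ, multichoose_succ, factor, ← merge]
    calc Ring.multichoose (s + α) n * ((s + n) / (n + 1) * (1 + α * (1 / (s + n))))
        ≤ Ring.multichoose s n * ((s + n) / s) ^ α
            * ((s + n) / (n + 1) * (1 + 1 / (s + n)) ^ α) := by gcongr
      _ = _ := by ring

/-- The binomial series of `(1 - X)^{-s}`. -/
noncomputable def invOneSubRpow (s : ℝ) : PowerSeries ℝ :=
  rescale (-1 : ℝ) (binomialSeries ℝ (-s))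

lemma coeff_invOneSubRpow (s : ℝ) (n : ℕ) : coeff n (invOneSubRpow s) = Ring.multichoose s n := by
  rw [invOneSubRpow, coeff_rescale, binomialSeries_coeff, Ring.choose_neg']
  rcases n.even_or_odd with h | h <;> simp [Int.negOnePow_def, h.neg_one_pow, Units.smul_def]

lemma constantCoeff_invOneSubRpow (s : ℝ) : constantCoeff (invOneSubRpow s) = 1 := by
  rw [← coeff_zero_eq_constantCoeff_apply, coeff_invOneSubRpow, Ring.multichoose_zero_right]

lemma invOneSubRpow_zero : invOneSubRpow 0 = 1 := by
  rw [invOneSubRpow, neg_zero, binomialSeries_zero, map_one]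

lemma invOneSubRpow_add (s t : ℝ) :
    invOneSubRpow (s + t) = invOneSubRpow s * invOneSubRpow t := by
  rw [invOneSubRpow, neg_add, binomialSeries_add, map_mul, invOneSubRpow, invOneSubRpow]

lemma invOneSubRpow_pow (s : ℝ) (i : ℕ) : invOneSubRpow s ^ i = invOneSubRpow (s * i) := by
  induction i with
  | zero => simp [invOneSubRpow_zero]
  | succ i ih => rw [pow_succ, ih, ← invOneSubRpow_add, Nat.cast_succ, mul_add_one]

lemma invOneSubRpow_mul_neg (s : ℝ) : invOneSubRpow s * invOneSubRpow (-s) = 1 := by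
  rw [← invOneSubRpow_add, add_neg_cancel, invOneSubRpow_zero]

lemma invOneSubRpow_neg_inv (s : ℝ) : (invOneSubRpow (-s))⁻¹ = invOneSubRpow s := by
  rw [PowerSeries.inv_eq_iff_mul_eq_one (by simp [constantCoeff_invOneSubRpow]),
    invOneSubRpow_mul_neg]

lemma one_sub_pow_mul_tsum_multichoose {R : Type*} [CommRing R] [TopologicalSpace R]
    [IsTopologicalRing R] [T2Space R] {A : R}
    (hA : ∀ i : ℕ, Summable fun k => (i.multichoose k : R) * A ^ k) (i : ℕ) :
    (1 - A) ^ i * ∑' k, (i.multichoose k : R) * A ^ k = 1 := by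
  induction i with
  | zero =>
    rw [tsum_eq_single 0 fun k hk => by
      obtain ⟨k, rfl⟩ := Nat.exists_eq_succ_of_ne_zero hk
      simp]
    simp
  | succ i ih =>
    have pascal : ∑' k, ((i + 1).multichoose k : R) * A ^ k
        = ∑' k, (i.multichoose k : R) * A ^ k
          + A * ∑' k, ((i + 1).multichoose k : R) * A ^ k := by
      nth_rw 1 [(hA (i + 1)).tsum_eq_zero_add]
      rw [(hA i).tsum_eq_zero_add, ← (hA (i + 1)).tsum_mul_left, add_assoc,
        ← ((summable_nat_add_iff 1).2 (hA i)).tsum_add ((hA (i + 1)).mul_left A)]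
      congr 1
      · simp
      · refine tsum_congr fun k => ?_
        rw [Nat.multichoose_succ_succ]
        push_cast
        ring
    rw [pow_succ, mul_assoc, one_sub_mul, sub_eq_of_eq_add pascal, ih]

lemma multichoose_le_two_pow (i k : ℕ) : (i.multichoose k : ℝ) ≤ 2 ^ i * 2 ^ k := by
  rw [Nat.multichoose_eq, ← pow_add]
  exact_mod_cast ((i + k - 1).choose_le_two_pow k).trans
    (Nat.pow_le_pow_right two_pos (Nat.sub_le _ 1))

lemma summable_multichoose_mul_multichoose {α ε : ℝ} (hα : 0 ≤ α) (hε : |ε| < 1 / 2) (i n : ℕ) :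
    Summable fun k : ℕ => (i.multichoose k : ℝ) * (ε ^ k * Ring.multichoose (α * k) n) := by
  have geometric : |2 * ε| < 1 := by
    rw [abs_mul, abs_two]
    linarith
  have summable_pow (m : ℕ) : Summable fun k : ℕ => (k : ℝ) ^ m * |2 * ε| ^ k :=
    summable_pow_mul_geometric_of_norm_lt_one m (by rwa [Real.norm_eq_abs, abs_abs])
  have summable_majorant := (((summable_pow n).mul_left (α ^ n)).add
    ((summable_pow 0).mul_left ((n : ℝ) ^ n))).mul_left (2 ^ i * 2 ^ (n - 1))
  refine summable_majorant.of_norm_bounded fun k => ?_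
  have hk := multichoose_nonneg (show 0 ≤ α * k by positivity) n
  have polynomial : Ring.multichoose (α * k) n ≤ 2 ^ (n - 1) * ((α * k) ^ n + (n : ℝ) ^ n) :=
    (multichoose_le_pow (by positivity) n).trans (add_pow_le (by positivity) (by positivity) n)
  rw [norm_mul, norm_mul, norm_pow, Real.norm_natCast, Real.norm_of_nonneg hk, Real.norm_eq_abs]
  calc (i.multichoose k : ℝ) * (|ε| ^ k * Ring.multichoose (α * k) n)
      ≤ (2 ^ i * 2 ^ k) * (|ε| ^ k * (2 ^ (n - 1) * ((α * k) ^ n + (n : ℝ) ^ n))) := by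
        gcongr
        exact multichoose_le_two_pow i k
    _ = _ := by
        rw [abs_mul, abs_two]
        ring

open scoped PowerSeries.WithPiTopology in
lemma hasSum_multichoose_mul_multichoose {α ε : ℝ} (hα : 0 ≤ α) (hε : |ε| < 1 / 2) (i : ℕ) (μ : ℝ)
    (n : ℕ) :
    HasSum (fun k : ℕ => (i.multichoose k : ℝ) * (ε ^ k * Ring.multichoose (μ + α * k) n))
      (coeff n (((1 - C ε * invOneSubRpow α) ^ i)⁻¹ * invOneSubRpow μ)) := by
  set A := C ε * invOneSubRpow α
  have coeff_term (i : ℕ) (s : ℝ) (k n : ℕ) :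
      coeff n ((i.multichoose k : PowerSeries ℝ) * A ^ k * invOneSubRpow s)
        = (i.multichoose k : ℝ) * (ε ^ k * Ring.multichoose (s + α * k) n) := by
    rw [mul_pow, invOneSubRpow_pow, ← map_pow, mul_assoc, mul_assoc, ← invOneSubRpow_add,
      ← map_natCast (C (R := ℝ)), coeff_C_mul, coeff_C_mul, coeff_invOneSubRpow, add_comm]
  have hA (i : ℕ) : Summable fun k => (i.multichoose k : PowerSeries ℝ) * A ^ k := by
    refine (WithPiTopology.summable_iff_summable_coeff ℝ).2 fun n => ?_
    refine (summable_multichoose_mul_multichoose hα hε i n).congr fun k => ?_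
    rw [← zero_add (α * _), ← coeff_term, invOneSubRpow_zero, mul_one]
  have sum_eq : ((1 - A) ^ i)⁻¹ = ∑' k, (i.multichoose k : PowerSeries ℝ) * A ^ k := by
    refine (PowerSeries.inv_eq_iff_mul_eq_one ?_).2 ?_
    · simpa [A, constantCoeff_invOneSubRpow, sub_eq_zero] using
        fun h : 1 = ε => by norm_num [← h] at hε
    · rw [mul_comm, one_sub_pow_mul_tsum_multichoose hA]
  have := (WithPiTopology.hasSum_iff_hasSum_coeff ℝ).1 ((hA i).hasSum.mul_right (invOneSubRpow μ)) n
  simpa only [coeff_term, sum_eq] using this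

lemma majorizedBy_invOneSubRpow {α μ ε : ℝ} (hα₀ : 0 ≤ α) (hα₂ : α ≤ 2) (hε₀ : 0 ≤ ε) {i : ℕ}
    (hi : i * (α / 2) ≤ μ) :
    MajorizedBy (((1 + C ε * invOneSubRpow α) ^ i)⁻¹ * invOneSubRpow μ) (invOneSubRpow μ) := by
  set y := invOneSubRpow (-(α / 2))
  set P := invOneSubRpow (α / 2)
  set Q := invOneSubRpow (μ - i * (α / 2))
  set G := (y ^ 2 + C ε)⁻¹
  have hyP : y * P = 1 := by rw [mul_comm, invOneSubRpow_mul_neg]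
  have hG : (y ^ 2 + C ε) * G = 1 := PowerSeries.mul_inv_cancel _ <| by
    rw [map_add, map_pow, constantCoeff_invOneSubRpow, constantCoeff_C]
    positivity
  have hPQ : invOneSubRpow μ = P ^ i * Q := by
    rw [invOneSubRpow_pow, ← invOneSubRpow_add]
    congr 1
    ring
  have hPP : invOneSubRpow α = P * P := by rw [← invOneSubRpow_add, add_halves]
  have hinv : ((1 + C ε * (P * P)) ^ i)⁻¹ = (y * G * y) ^ i := by
    refine (PowerSeries.inv_eq_iff_mul_eq_one ?_).2 ?_
    · simpa [P, constantCoeff_invOneSubRpow] using fun h : 1 + ε = 0 => absurd h (by positivity)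
    · rw [← mul_pow, show y * G * y * (1 + C ε * (P * P)) = 1 by
        linear_combination hG + C ε * G * (y * P + 1) * hyP, one_pow]
  have resolvent : MajorizedBy (y * G) P := by
    rw [show P = y⁻¹ from (invOneSubRpow_neg_inv _).symm]
    refine majorizedBy_mul_inv_sq_add_C ?_ (fun n hn => ?_) hε₀
    · rw [constantCoeff_invOneSubRpow]
      exact one_pos
    · rw [coeff_invOneSubRpow]
      exact multichoose_neg_nonpos (by positivity) (by linarith) hn
  rw [hPQ, hPP, hinv, ← mul_assoc, ← mul_pow, mul_assoc _ y, hyP, mul_one]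
  refine (resolvent.pow i).mul (majorizedBy_self fun n => ?_)
  rw [coeff_invOneSubRpow]
  exact multichoose_nonneg (sub_nonneg.2 hi) n

lemma abs_tsum_multichoose_mul_multichoose_le {α μ ε : ℝ} (hα₀ : 0 ≤ α) (hα₂ : α ≤ 2)
    (hε₀ : 0 ≤ ε) (hε : ε < 1 / 2) {i : ℕ} (hi : i * (α / 2) ≤ μ) (n : ℕ) :
    |∑' k : ℕ, (i.multichoose k : ℝ) * ((-ε) ^ k * Ring.multichoose (μ + α * k) n)|
      ≤ Ring.multichoose μ n := by
  rw [(hasSum_multichoose_mul_multichoose hα₀ (by rwa [abs_neg, abs_of_nonneg hε₀]) i μ n).tsum_eq,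
    map_neg, neg_mul, sub_neg_eq_add, ← coeff_invOneSubRpow, ← Real.norm_eq_abs]
  exact majorizedBy_invOneSubRpow hα₀ hα₂ hε₀ hi n

end BinomialSeries

/-! ### Mittag-Leffler functions -/

section MittagLeffler

/-- The Prabhakar (three-parameter Mittag-Leffler) function
`E^i_{α,μ}(z) = ∑ₖ multichoose(i, k) zᵏ / Γ(μ + α k)`, for a natural number `i`. Mathlib's junk
value `Γ = 0` at the poles of `Γ` gives those terms the intended value `0`. -/
noncomputable def prabhakar (i : ℕ) (α μ z : ℝ) : ℝ :=
  ∑' k : ℕ, (i.multichoose k : ℝ) * z ^ k / Real.Gamma (μ + α * k)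

/-- The two-parameter Mittag-Leffler function `E_{α,μ}(z) = ∑ₖ zᵏ / Γ(μ + α k)`, with the convention
`1 / Γ = 0` at the poles of `Γ`. -/
noncomputable def mittagLeffler (α μ z : ℝ) : ℝ :=
  ∑' k : ℕ, z ^ k / Real.Gamma (μ + α * k)

lemma prabhakar_one (α μ z : ℝ) : prabhakar 1 α μ z = mittagLeffler α μ z := by
  simp [prabhakar, mittagLeffler]

lemma tendsto_add_mul_natCast_atTop {α : ℝ} (hα : 0 < α) (μ : ℝ) :
    Tendsto (fun k : ℕ => μ + α * k) atTop atTop :=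
  tendsto_atTop_add_const_left _ _ (tendsto_natCast_atTop_atTop.const_mul_atTop hα)

lemma mul_Gamma_le_Gamma_add {s α : ℝ} (hs : 2 ≤ s) (hα : 1 ≤ α) :
    s * Real.Gamma s ≤ Real.Gamma (s + α) := by
  rw [← Real.Gamma_add_one (by positivity)]
  exact Real.Gamma_strictMonoOn_Ici.monotoneOn (Set.mem_Ici.2 (by linarith))
    (Set.mem_Ici.2 (by linarith)) (by linarith)

lemma summable_pow_div_Gamma {α : ℝ} (hα : 1 ≤ α) (μ z : ℝ) :
    Summable fun k : ℕ => z ^ k / Real.Gamma (μ + α * k) := by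
  refine summable_of_ratio_norm_eventually_le one_half_lt_one ?_
  filter_upwards [(tendsto_add_mul_natCast_atTop (zero_lt_one.trans_le hα) μ).eventually_ge_atTop
    (max 2 (2 * |z|))] with k hk
  obtain ⟨hk₂, hkz⟩ := max_le_iff.1 hk
  have hΓ : 0 < Real.Gamma (μ + α * k) := Real.Gamma_pos_of_pos (by linarith)
  have hΓ' := mul_Gamma_le_Gamma_add hk₂ hα
  rw [Nat.cast_succ, mul_add_one, ← add_assoc, norm_div, norm_div, Real.norm_of_nonneg hΓ.le,
    Real.norm_of_nonneg ((by positivity : (0 : ℝ) ≤ _).trans hΓ'), norm_pow, norm_pow,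
    Real.norm_eq_abs]
  calc |z| ^ (k + 1) / Real.Gamma (μ + α * k + α)
      ≤ |z| ^ (k + 1) / ((μ + α * k) * Real.Gamma (μ + α * k)) := by gcongr
    _ = |z| / (μ + α * k) * (|z| ^ k / Real.Gamma (μ + α * k)) := by
        rw [pow_succ, mul_comm (|z| ^ k), mul_div_mul_comm]
    _ ≤ 1 / 2 * (|z| ^ k / Real.Gamma (μ + α * k)) := by
        gcongr ?_ * _
        rw [div_le_iff₀ (by linarith)]
        linarith

lemma summable_prabhakar {α : ℝ} (hα : 1 ≤ α) (i : ℕ) (μ z : ℝ) :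
    Summable fun k : ℕ => (i.multichoose k : ℝ) * z ^ k / Real.Gamma (μ + α * k) := by
  refine ((summable_pow_div_Gamma hα μ (2 * z)).norm.mul_left (2 ^ i)).of_norm_bounded fun k => ?_
  rw [norm_div, norm_div, norm_mul, Real.norm_natCast, mul_pow, norm_mul, norm_pow (2 : ℝ),
    Real.norm_ofNat, ← mul_div_assoc, ← mul_assoc]
  gcongr
  exact multichoose_le_two_pow i k

lemma continuous_mittagLeffler {α : ℝ} (hα : 1 ≤ α) (μ : ℝ) : Continuous (mittagLeffler α μ) := by
  refine continuous_iff_continuousAt.2 fun z₀ => ?_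
  have hu := (summable_pow_div_Gamma hα μ (|z₀| + 1)).norm
  have hz₀ : Set.Icc (-(|z₀| + 1)) (|z₀| + 1) ∈ nhds z₀ :=
    Icc_mem_nhds (by linarith [neg_abs_le z₀]) (by linarith [le_abs_self z₀])
  refine (continuousOn_tsum (fun k => by fun_prop) hu fun k z hz => ?_).continuousAt hz₀
  rw [norm_div, norm_div, norm_pow, norm_pow, Real.norm_eq_abs,
    Real.norm_of_nonneg (by positivity : 0 ≤ |z₀| + 1)]
  gcongr
  exact abs_le.2 hz

/-- Euler's approximation of `1 / Γ(s)`, by the rescaled coefficients of `(1 - X)^{-s}`. -/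
noncomputable def invGammaSeq (s : ℝ) (n : ℕ) : ℝ := (n : ℝ) ^ (1 - s) * Ring.multichoose s n

lemma invGammaSeq_nonneg {s : ℝ} (hs : 0 ≤ s) (n : ℕ) : 0 ≤ invGammaSeq s n :=
  mul_nonneg (by positivity) (multichoose_nonneg hs n)

lemma tendsto_invGammaSeq {s : ℝ} (hs : 0 < s) :
    Tendsto (invGammaSeq s) atTop (nhds (1 / Real.Gamma s)) := by
  have euler := (Real.GammaSeq_tendsto_Gamma s).inv₀ (Real.Gamma_pos_of_pos hs).ne'
  have correction : Tendsto (fun n : ℕ => (1 + s / (n : ℝ))⁻¹) atTop (nhds 1) := by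
    simpa using ((tendsto_natCast_atTop_atTop.const_div_atTop s).const_add 1).inv₀ (by norm_num)
  rw [one_div, ← mul_one (Real.Gamma s)⁻¹]
  refine (euler.mul correction).congr' ?_
  filter_upwards [eventually_gt_atTop 0] with n hn
  have hn' : (0 : ℝ) < n := Nat.cast_pos.2 hn
  rw [invGammaSeq, multichoose_eq_prod_div, Real.GammaSeq, Finset.prod_range_succ,
    Real.rpow_sub hn', Real.rpow_one]
  field_simp
  ring

lemma invGammaSeq_add_le {s α : ℝ} (hs : 0 < s) (hα : 1 ≤ α) {n : ℕ} (hn : 0 < n) :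
    invGammaSeq (s + α) n ≤ (1 / n + 1 / s) ^ α * invGammaSeq s n := by
  have hn' : (0 : ℝ) < n := Nat.cast_pos.2 hn
  have scaling :
      (n : ℝ) ^ (1 - (s + α)) * ((s + n) / s) ^ α = n ^ (1 - s) * (1 / n + 1 / s) ^ α := by
    rw [← sub_sub, Real.rpow_sub hn', div_mul_eq_mul_div, mul_div_assoc,
      ← Real.div_rpow (by positivity) hn'.le]
    congr 2
    field_simp
  calc invGammaSeq (s + α) n
      ≤ (n : ℝ) ^ (1 - (s + α)) * (Ring.multichoose s n * ((s + n) / s) ^ α) :=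
        mul_le_mul_of_nonneg_left (multichoose_add_le hs hα n) (by positivity)
    _ = (1 / n + 1 / s) ^ α * invGammaSeq s n := by
        rw [mul_left_comm, scaling, invGammaSeq]
        ring

lemma summable_prod_range_of_tendsto {ρ : ℕ → ℝ} {l : ℝ} (hρ₀ : ∀ k, 0 ≤ ρ k)
    (hρ : Tendsto ρ atTop (nhds l)) (hl : l < 1) :
    Summable fun k => ∏ j ∈ Finset.range k, ρ j := by
  obtain ⟨r, hlr, hr⟩ := exists_between hl
  refine summable_of_ratio_norm_eventually_le hr ?_
  filter_upwards [hρ.eventually_le_const hlr] with k hk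
  rw [Finset.prod_range_succ, norm_mul, mul_comm, Real.norm_of_nonneg (hρ₀ k)]
  exact mul_le_mul_of_nonneg_right hk (norm_nonneg _)

lemma exists_summable_bound_invGammaSeq {α μ : ℝ} (hα : 1 ≤ α) (hμ : 0 < μ) {x : ℝ} (hx : 0 ≤ x) :
    ∃ b : ℕ → ℝ, (Summable fun k => x ^ k * b k) ∧
      ∀ᶠ n in atTop, ∀ k : ℕ, invGammaSeq (μ + α * k) n ≤ b k := by
  have hα₀ : 0 < α := zero_lt_one.trans_le hα
  obtain ⟨A, hA⟩ := (tendsto_invGammaSeq hμ).bddAbove_range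
  have lim_zero : Tendsto (fun N : ℕ => x * (1 / (N : ℝ) + 0) ^ α) atTop (nhds 0) := by
    simpa [Real.zero_rpow hα₀.ne'] using
      ((tendsto_natCast_atTop_atTop.const_div_atTop 1).rpow_const (Or.inr hα₀.le)).const_mul x
  obtain ⟨N, hN₁, hN₀⟩ :=
    ((lim_zero.eventually_lt_const one_pos).and (eventually_gt_atTop 0)).exists
  set ρ : ℕ → ℝ := fun k => (1 / (N : ℝ) + 1 / (μ + α * k)) ^ α
  have hρ₀ (k : ℕ) : 0 ≤ ρ k := by positivity
  refine ⟨fun k => A * ∏ j ∈ Finset.range k, ρ j, ?_, ?_⟩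
  · refine ((summable_prod_range_of_tendsto (ρ := fun k => x * ρ k)
      (fun k => mul_nonneg hx (hρ₀ k)) (Tendsto.const_mul _ (Tendsto.rpow_const
        (((tendsto_add_mul_natCast_atTop hα₀ μ).const_div_atTop 1).const_add _)
        (Or.inr hα₀.le))) hN₁).mul_left A).congr fun k => ?_
    rw [Finset.prod_mul_distrib, Finset.prod_const, Finset.card_range]
    ring
  · filter_upwards [eventually_ge_atTop N] with n hn k
    induction k with
    | zero => simpa using hA ⟨n, rfl⟩
    | succ k ih =>
      have hs : 0 < μ + α * k := by positivity
      have step : invGammaSeq (μ + α * k + α) n ≤ ρ k * invGammaSeq (μ + α * k) n := by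
        refine (invGammaSeq_add_le hs hα (hN₀.trans_le hn)).trans
          (mul_le_mul_of_nonneg_right ?_ (invGammaSeq_nonneg hs.le n))
        simp only [ρ]
        gcongr
      rw [Nat.cast_succ, mul_add_one, ← add_assoc, Finset.prod_range_succ, mul_comm _ (ρ k),
        mul_left_comm]
      exact step.trans (mul_le_mul_of_nonneg_left ih (hρ₀ k))

lemma tendsto_tsum_invGammaSeq {α μ : ℝ} (hα : 1 ≤ α) (hμ : 0 < μ) (i : ℕ) (z : ℝ) :
    Tendsto (fun n => ∑' k : ℕ, (i.multichoose k : ℝ) * z ^ k * invGammaSeq (μ + α * k) n)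
      atTop (nhds (prabhakar i α μ z)) := by
  have hs (k : ℕ) : 0 < μ + α * k := by positivity
  obtain ⟨b, hb, hb_le⟩ :=
    exists_summable_bound_invGammaSeq hα hμ (x := 2 * |z|) (by positivity)
  refine tendsto_tsum_of_dominated_convergence (hb.mul_left (2 ^ i)) (fun k => ?_) ?_
  · simpa only [mul_one_div] using
      (tendsto_invGammaSeq (hs k)).const_mul ((i.multichoose k : ℝ) * z ^ k)
  · filter_upwards [hb_le] with n hn k
    have hnonneg := invGammaSeq_nonneg (hs k).le n
    rw [norm_mul, norm_mul, norm_pow, Real.norm_natCast, Real.norm_of_nonneg hnonneg,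
      Real.norm_eq_abs]
    calc (i.multichoose k : ℝ) * |z| ^ k * invGammaSeq (μ + α * k) n
        ≤ 2 ^ i * 2 ^ k * |z| ^ k * b k := by
          gcongr
          exacts [multichoose_le_two_pow i k, hn k]
      _ = 2 ^ i * ((2 * |z|) ^ k * b k) := by rw [mul_pow]; ring

lemma abs_prabhakar_neg_le {α μ : ℝ} (hα₁ : 1 ≤ α) (hα₂ : α ≤ 2) (hμ : 0 < μ) {i : ℕ}
    (hi : i * (α / 2) ≤ μ) {x : ℝ} (hx : 0 ≤ x) :
    |prabhakar i α μ (-x)| ≤ 1 / Real.Gamma μ := by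
  refine le_of_tendsto_of_tendsto (tendsto_tsum_invGammaSeq hα₁ hμ i (-x)).abs
    (tendsto_invGammaSeq hμ) ?_
  have small : Tendsto (fun n : ℕ => x * (n : ℝ) ^ (-α)) atTop (nhds 0) := by
    simpa using
      ((tendsto_rpow_neg_atTop (by linarith)).comp tendsto_natCast_atTop_atTop).const_mul x
  filter_upwards [small.eventually_lt_const one_half_pos, eventually_gt_atTop 0] with n hn hn₀
  have hn' : (0 : ℝ) < n := Nat.cast_pos.2 hn₀
  have rescale (k : ℕ) : (i.multichoose k : ℝ) * (-x) ^ k * invGammaSeq (μ + α * k) n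
      = (n : ℝ) ^ (1 - μ) * ((i.multichoose k : ℝ) *
        ((-(x * (n : ℝ) ^ (-α))) ^ k * Ring.multichoose (μ + α * k) n)) := by
    rw [invGammaSeq, ← sub_sub, sub_eq_add_neg _ (α * k), ← neg_mul, Real.rpow_add hn',
      Real.rpow_mul hn'.le, Real.rpow_natCast, ← neg_mul, mul_pow]
    ring
  simp only [rescale]
  rw [tsum_mul_left, abs_mul, abs_of_pos (by positivity), invGammaSeq]
  gcongr
  exact abs_tsum_multichoose_mul_multichoose_le (by linarith) hα₂ (by positivity) hn hi n

lemma mul_multichoose_succ (i k : ℕ) :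
    i * (i + 1).multichoose k = (i + k) * i.multichoose k := by
  refine Nat.eq_of_mul_eq_mul_left k.factorial_pos ?_
  rw [Nat.multichoose_eq, Nat.multichoose_eq, mul_left_comm, mul_left_comm _ (i + k),
    ← Nat.ascFactorial_eq_factorial_mul_choose', ← Nat.ascFactorial_eq_factorial_mul_choose']
  exact Nat.succ_ascFactorial i k

lemma one_div_Gamma_eq_div_Gamma_add_one (s : ℝ) :
    1 / Real.Gamma s = s / Real.Gamma (s + 1) := by
  rcases eq_or_ne s 0 with rfl | hs
  · simp
  · rw [Real.Gamma_add_one hs, div_mul_cancel_left₀ hs, one_div]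

lemma prabhakar_eq_add {α : ℝ} (hα : 1 ≤ α) (i : ℕ) (μ z : ℝ) :
    prabhakar i α μ z
      = (μ - i * α) * prabhakar i α (μ + 1) z + i * α * prabhakar (i + 1) α (μ + 1) z := by
  rw [prabhakar, prabhakar, prabhakar, ← tsum_mul_left, ← tsum_mul_left,
    ← ((summable_prabhakar hα i (μ + 1) z).mul_left _).tsum_add
      ((summable_prabhakar hα (i + 1) (μ + 1) z).mul_left _)]
  refine tsum_congr fun k => ?_
  have h : (i : ℝ) * (i + 1).multichoose k = (i + k) * i.multichoose k :=
    mod_cast mul_multichoose_succ i k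
  rw [← mul_one_div, one_div_Gamma_eq_div_Gamma_add_one, add_right_comm]
  linear_combination (-(α * z ^ k / Real.Gamma (μ + 1 + α * k))) * h

/-- Each use of the recursion `prabhakar_eq_add` raises `μ` by `1` and `i` by at most `1`, so that
`j` of them lead to indices covered by `abs_prabhakar_neg_le`. -/
lemma exists_abs_prabhakar_neg_le {α : ℝ} (hα₁ : 1 ≤ α) (hα₂ : α ≤ 2) (j : ℕ) {i : ℕ} {μ : ℝ}
    (hμ : 0 < μ + j) (hi : (i + j) * (α / 2) ≤ μ + j) :
    ∃ C, ∀ x, 0 ≤ x → |prabhakar i α μ (-x)| ≤ C := by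
  induction j generalizing i μ with
  | zero =>
    rw [Nat.cast_zero, add_zero] at hμ hi
    rw [add_zero] at hi
    exact ⟨_, fun x hx => abs_prabhakar_neg_le hα₁ hα₂ hμ hi hx⟩
  | succ j ih =>
    push_cast at hμ hi
    obtain ⟨C₁, hC₁⟩ := ih (i := i) (μ := μ + 1) (by linarith) (by linarith)
    obtain ⟨C₂, hC₂⟩ := ih (i := i + 1) (μ := μ + 1) (by linarith) (by push_cast; linarith)
    refine ⟨|μ - i * α| * C₁ + |i * α| * C₂, fun x hx => ?_⟩
    rw [prabhakar_eq_add hα₁]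
    refine (abs_add_le _ _).trans ?_
    rw [abs_mul, abs_mul]
    gcongr
    exacts [hC₁ x hx, hC₂ x hx]

lemma exists_abs_mittagLeffler_neg_le {α : ℝ} (hα₁ : 1 ≤ α) (hα₂ : α < 2) (μ : ℝ) :
    ∃ C, ∀ x, 0 ≤ x → |mittagLeffler α μ (-x)| ≤ C := by
  obtain ⟨j, hj⟩ := exists_nat_gt (max (-μ) ((α / 2 - μ) / (1 - α / 2)))
  obtain ⟨hj₁, hj₂⟩ := max_lt_iff.1 hj
  rw [div_lt_iff₀ (by linarith)] at hj₂
  simpa only [prabhakar_one] using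
    exists_abs_prabhakar_neg_le hα₁ hα₂.le j (i := 1) (μ := μ) (by linarith)
      (by rw [Nat.cast_one]; linarith)

lemma mittagLeffler_eq_add_mul {α : ℝ} (hα : 1 ≤ α) (μ z : ℝ) :
    mittagLeffler α μ z = 1 / Real.Gamma μ + z * mittagLeffler α (μ + α) z := by
  rw [mittagLeffler, mittagLeffler, (summable_pow_div_Gamma hα μ z).tsum_eq_zero_add,
    ← tsum_mul_left]
  congr 1
  · simp
  · refine tsum_congr fun k => ?_
    rw [pow_succ', mul_div_assoc, Nat.cast_succ, mul_add_one, ← add_assoc, add_right_comm]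

lemma mul_mittagLeffler_neg {α : ℝ} (hα : 1 ≤ α) (μ x : ℝ) :
    x * mittagLeffler α μ (-x) = 1 / Real.Gamma (μ - α) - mittagLeffler α (μ - α) (-x) := by
  rw [mittagLeffler_eq_add_mul hα (μ - α), sub_add_cancel]
  ring

lemma mittagLeffler_neg_nonneg {α μ : ℝ} (hα₁ : 1 ≤ α) (hα₂ : α ≤ 2) (hμ : 3 * (α / 2) ≤ μ)
    {x : ℝ} (hx : 0 < x) : 0 ≤ mittagLeffler α μ (-x) := by
  refine nonneg_of_mul_nonneg_right ?_ hx
  rw [mul_mittagLeffler_neg hα₁, sub_nonneg, ← prabhakar_one]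
  exact (le_abs_self _).trans
    (abs_prabhakar_neg_le hα₁ hα₂ (by linarith) (by rw [Nat.cast_one]; linarith) hx.le)

lemma tendsto_mittagLeffler_neg_atTop {α : ℝ} (hα₁ : 1 ≤ α) (hα₂ : α < 2) (μ : ℝ) :
    Tendsto (fun x => mittagLeffler α μ (-x)) atTop (nhds 0) := by
  obtain ⟨C, hC⟩ := exists_abs_mittagLeffler_neg_le hα₁ hα₂ (μ - α)
  refine squeeze_zero_norm' ?_
    (tendsto_const_nhds (x := |1 / Real.Gamma (μ - α)| + C) |>.div_atTop tendsto_id)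
  filter_upwards [eventually_gt_atTop 0] with x hx
  rw [id, le_div_iff₀ hx, Real.norm_eq_abs, mul_comm, ← abs_of_pos hx, ← abs_mul, abs_of_pos hx,
    mul_mittagLeffler_neg hα₁]
  exact (abs_sub _ _).trans (add_le_add_right (hC x hx.le) _)

lemma tendsto_mul_mittagLeffler_neg_atTop {α : ℝ} (hα₁ : 1 ≤ α) (hα₂ : α < 2) (μ : ℝ) :
    Tendsto (fun x => x * mittagLeffler α μ (-x)) atTop (nhds (1 / Real.Gamma (μ - α))) := by
  simpa only [mul_mittagLeffler_neg hα₁, sub_zero] using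
    (tendsto_mittagLeffler_neg_atTop hα₁ hα₂ (μ - α)).const_sub (1 / Real.Gamma (μ - α))

end MittagLeffler

/-! ### Causal convolution -/

/-- The causal convolution `(p ⋆₊ u)(t) = ∫₀ᵗ p(s) u(t - s) ds` of two functions on `(0, ∞)`,
through which fractional integrals are expressed. -/
noncomputable def causalConv (p u : ℝ → ℝ) (t : ℝ) : ℝ := ∫ s in (0 : ℝ)..t, p s * u (t - s)

local infixl:70 "⋆₊" => causalConv

local notation "vol₊" => (volume.restrict (Set.Ioi (0 : ℝ)) : Measure ℝ)

section CausalConvolution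

lemma locallyIntegrableOn_Ici_iff {u : ℝ → ℝ} :
    LocallyIntegrableOn u (Set.Ici 0) ↔ ∀ T > 0, IntegrableOn u (Set.Ioo 0 T) := by
  refine ⟨fun hu T _ => ?_, fun hu t ht => ⟨Set.Ico 0 (t + 1), ?_, ?_⟩⟩
  · exact (hu.integrableOn_compact_subset Set.Icc_subset_Ici_self isCompact_Icc).mono_set
      Set.Ioo_subset_Icc_self
  · exact inter_mem_nhdsWithin _ (Iio_mem_nhds (lt_add_one t))
  · exact (hu (t + 1) (add_pos_of_nonneg_of_pos ht one_pos)).congr_set_ae Ioo_ae_eq_Ico.symm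

lemma locallyIntegrableOn_Ici_iff_intervalIntegrable {u : ℝ → ℝ} :
    LocallyIntegrableOn u (Set.Ici 0) ↔ ∀ T > 0, IntervalIntegrable u volume 0 T :=
  locallyIntegrableOn_Ici_iff.trans <| forall₂_congr fun _ hT =>
    (intervalIntegrable_iff_integrableOn_Ioo_of_le (le_of_lt hT)).symm

lemma ae_restrict_Ioi_of_forall_Ioo {P : ℝ → Prop}
    (h : ∀ T > 0, ∀ᵐ t ∂volume.restrict (Set.Ioo 0 T), P t) : ∀ᵐ t ∂vol₊, P t := by
  have hU : Set.Ioi (0 : ℝ) ⊆ ⋃ n : ℕ, Set.Ioo 0 (n + 1 : ℝ) := fun t ht =>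
    let ⟨n, hn⟩ := exists_nat_gt t
    Set.mem_iUnion.2 ⟨n, ht, hn.trans (lt_add_one _)⟩
  exact ae_restrict_of_ae_restrict_of_subset hU
    ((ae_restrict_iUnion_iff _ _).2 fun n => h _ (by positivity))

lemma locallyIntegrableOn_Ici_congr_ae {u v : ℝ → ℝ} (hu : LocallyIntegrableOn u (Set.Ici 0))
    (h : u =ᵐ[vol₊] v) : LocallyIntegrableOn v (Set.Ici 0) :=
  locallyIntegrableOn_Ici_iff.2 fun T hT => (locallyIntegrableOn_Ici_iff.1 hu T hT).congr_fun_ae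
    (ae_restrict_of_ae_restrict_of_subset Set.Ioo_subset_Ioi_self h)

lemma causalConv_comm (p u : ℝ → ℝ) : p ⋆₊ u = u ⋆₊ p := by
  funext t
  have h := intervalIntegral.integral_comp_sub_left (fun s => p s * u (t - s)) (a := 0) (b := t) t
  simp only [sub_sub_cancel, sub_self, sub_zero] at h
  simp only [causalConv, ← h, mul_comm]

lemma causalConv_zero_right (p u : ℝ → ℝ) : (p ⋆₊ u) 0 = 0 := intervalIntegral.integral_same

lemma causalConv_congr_of_eqOn {p q u v : ℝ → ℝ} {T : ℝ} (hpq : Set.EqOn p q (Set.Ioo 0 T))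
    (huv : Set.EqOn u v (Set.Ioo 0 T)) : Set.EqOn (p ⋆₊ u) (q ⋆₊ v) (Set.Ioo 0 T) := by
  intro t ht
  rw [causalConv, causalConv, intervalIntegral.integral_of_le ht.1.le,
    intervalIntegral.integral_of_le ht.1.le, integral_Ioc_eq_integral_Ioo,
    integral_Ioc_eq_integral_Ioo]
  refine setIntegral_congr_fun measurableSet_Ioo fun s hs => ?_
  rw [hpq ⟨hs.1, hs.2.trans ht.2⟩, huv ⟨sub_pos.2 hs.2, (sub_lt_self t hs.1).trans ht.2⟩]

lemma causalConv_congr_left {p q : ℝ → ℝ} (h : p =ᵐ[vol₊] q) (u : ℝ → ℝ) :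
    Set.EqOn (p ⋆₊ u) (q ⋆₊ u) (Set.Ioi 0) := by
  intro t ht
  refine intervalIntegral.integral_congr_ae ?_
  filter_upwards [(ae_restrict_iff' measurableSet_Ioi).1 h] with s hs hst
  rw [Set.uIoc_of_le (le_of_lt ht)] at hst
  rw [hs hst.1]

lemma causalConv_congr_right (p : ℝ → ℝ) {u v : ℝ → ℝ} (h : u =ᵐ[vol₊] v) :
    Set.EqOn (p ⋆₊ u) (p ⋆₊ v) (Set.Ioi 0) := by
  simpa only [causalConv_comm p] using causalConv_congr_left h p

lemma causalConv_smul (p : ℝ → ℝ) (c : ℝ) (u : ℝ → ℝ) : p ⋆₊ (c • u) = c • (p ⋆₊ u) := by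
  funext t
  simp only [causalConv, Pi.smul_apply, smul_eq_mul, ← intervalIntegral.integral_const_mul,
    mul_left_comm]

lemma causalConv_nonneg {p u : ℝ → ℝ} (hp : ∀ s > 0, 0 ≤ p s) (hu : 0 ≤ᵐ[vol₊] u) {t : ℝ}
    (ht : 0 < t) : 0 ≤ (p ⋆₊ u) t := by
  rw [causalConv_comm, causalConv, intervalIntegral.integral_of_le ht.le,
    integral_Ioc_eq_integral_Ioo]
  refine integral_nonneg_of_ae ?_
  filter_upwards [ae_restrict_of_ae_restrict_of_subset Set.Ioo_subset_Ioi_self hu,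
    ae_restrict_mem measurableSet_Ioo] with s hs hst
  exact mul_nonneg hs (hp _ (sub_pos.2 hst.2))

/-- `P` vanishes on `(-∞, 0]` and extends the restriction of `p` to `(0, T)`. Up to time `T` the
causal convolution of `p` with another function can be computed as an ordinary convolution on `ℝ`
with `P` in place of `p`. -/
def CausalExtension (T : ℝ) (p P : ℝ → ℝ) : Prop :=
  (∀ t ≤ 0, P t = 0) ∧ Set.EqOn P p (Set.Ioo 0 T)

lemma causalExtension_indicator (T : ℝ) (p : ℝ → ℝ) :
    CausalExtension T p ((Set.Ioo 0 T).indicator p) :=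
  ⟨fun _ ht => Set.indicator_of_notMem (fun h => ht.not_gt h.1) p, Set.eqOn_indicator⟩

lemma CausalExtension.convolution {T : ℝ} {p u P U : ℝ → ℝ} (hP : CausalExtension T p P)
    (hU : CausalExtension T u U) :
    CausalExtension T (p ⋆₊ u) (convolution P U (ContinuousLinearMap.mul ℝ ℝ) volume) := by
  have indicator_eq {Q : ℝ → ℝ} (hQ : ∀ t ≤ 0, Q t = 0) : (Set.Ioi 0).indicator Q = Q :=
    Set.indicator_eq_self.2 fun t ht => not_le.1 fun h => ht (hQ t h)
  have h := posConvolution_eq_convolution_indicator P U (ContinuousLinearMap.mul ℝ ℝ) volume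
  rw [indicator_eq hP.1, indicator_eq hU.1] at h
  rw [← h]
  refine ⟨fun t ht => Set.indicator_of_notMem (not_lt.2 ht) _, fun t ht => ?_⟩
  exact (Set.indicator_of_mem (Set.mem_Ioi.2 ht.1) _).trans
    (causalConv_congr_of_eqOn hP.2 hU.2 ht)

variable {p q u v : ℝ → ℝ} (hp : LocallyIntegrableOn p (Set.Ici 0))
  (hq : LocallyIntegrableOn q (Set.Ici 0)) (hu : LocallyIntegrableOn u (Set.Ici 0))
  (hv : LocallyIntegrableOn v (Set.Ici 0))

include hp in
lemma integrable_indicator_Ioo (T : ℝ) : Integrable ((Set.Ioo 0 T).indicator p) :=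
  (integrable_indicator_iff measurableSet_Ioo).2 <|
    (hp.integrableOn_compact_subset Set.Icc_subset_Ici_self isCompact_Icc).mono_set
      Set.Ioo_subset_Icc_self

include hp hu in
lemma locallyIntegrableOn_causalConv : LocallyIntegrableOn (p ⋆₊ u) (Set.Ici 0) := by
  refine locallyIntegrableOn_Ici_iff.2 fun T _ => ?_
  have h := (integrable_indicator_Ioo hp T).integrable_convolution (ContinuousLinearMap.mul ℝ ℝ)
    (integrable_indicator_Ioo hu T)
  exact h.integrableOn.congr_fun
    ((causalExtension_indicator T p).convolution (causalExtension_indicator T u)).2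
    measurableSet_Ioo

include hp hu in
lemma ae_intervalIntegrable_causalConv :
    ∀ᵐ t ∂vol₊, IntervalIntegrable (fun s => p s * u (t - s)) volume 0 t := by
  refine ae_restrict_Ioi_of_forall_Ioo fun T _ => ?_
  filter_upwards [ae_restrict_of_ae ((integrable_indicator_Ioo hp T).ae_convolution_exists
    (ContinuousLinearMap.mul ℝ ℝ) (integrable_indicator_Ioo hu T)),
    ae_restrict_mem measurableSet_Ioo] with t ht htT
  rw [intervalIntegrable_iff_integrableOn_Ioo_of_le htT.1.le]
  refine (Integrable.integrableOn ht).congr_fun (fun s hs => ?_) measurableSet_Ioo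
  have hs' : s ∈ Set.Ioo 0 T := ⟨hs.1, hs.2.trans htT.2⟩
  have hts : t - s ∈ Set.Ioo 0 T := ⟨sub_pos.2 hs.2, (sub_lt_self t hs.1).trans htT.2⟩
  simp only [ContinuousLinearMap.mul_apply', Set.indicator_of_mem hs', Set.indicator_of_mem hts]

include hp hu hv in
lemma causalConv_add : p ⋆₊ (u + v) =ᵐ[vol₊] p ⋆₊ u + p ⋆₊ v := by
  filter_upwards [ae_intervalIntegrable_causalConv hp hu,
    ae_intervalIntegrable_causalConv hp hv] with t hpu hpv
  simp only [causalConv, Pi.add_apply, mul_add]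
  exact intervalIntegral.integral_add hpu hpv

include hp hq hu in
lemma causalConv_assoc : p ⋆₊ q ⋆₊ u =ᵐ[vol₊] p ⋆₊ (q ⋆₊ u) := by
  refine ae_restrict_Ioi_of_forall_Ioo fun T _ => ?_
  let L := ContinuousLinearMap.mul ℝ ℝ
  have P := integrable_indicator_Ioo hp T
  have Q := integrable_indicator_Ioo hq T
  have U := integrable_indicator_Ioo hu T
  have Pp := causalExtension_indicator T p
  have Qq := causalExtension_indicator T q
  have Uu := causalExtension_indicator T u
  filter_upwards [ae_restrict_of_ae <|
    P.norm.ae_convolution_exists L (Q.norm.integrable_convolution L U.norm),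
    ae_restrict_mem measurableSet_Ioo] with t ht htT
  rw [← ((Pp.convolution Qq).convolution Uu).2 htT, ← (Pp.convolution (Qq.convolution Uu)).2 htT]
  exact convolution_assoc L L L L mul_assoc P.aestronglyMeasurable Q.aestronglyMeasurable
    U.aestronglyMeasurable (P.ae_convolution_exists L Q) (Q.norm.ae_convolution_exists L U.norm) ht

lemma one_causalConv (u : ℝ → ℝ) (t : ℝ) : ((1 : ℝ → ℝ) ⋆₊ u) t = ∫ s in (0 : ℝ)..t, u s := by
  rw [causalConv_comm]
  simp only [causalConv, Pi.one_apply, mul_one]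

include hu in
lemma continuousOn_one_causalConv : ContinuousOn ((1 : ℝ → ℝ) ⋆₊ u) (Set.Ioi 0) := by
  intro t ht
  have hT : (0 : ℝ) ≤ t + 1 := add_nonneg (le_of_lt ht) zero_le_one
  have h := intervalIntegral.continuousOn_primitive_interval
    (Set.uIcc_of_le hT ▸ hu.integrableOn_compact_subset Set.Icc_subset_Ici_self isCompact_Icc)
  rw [Set.uIcc_of_le hT] at h
  simp only [funext (one_causalConv u)]
  exact (h.continuousAt (Icc_mem_nhds ht (lt_add_one t))).continuousWithinAt

include hu in
lemma ae_eq_zero_of_one_causalConv (h : (1 : ℝ → ℝ) ⋆₊ u =ᵐ[vol₊] 0) : u =ᵐ[vol₊] 0 := by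
  have hprim : Set.EqOn ((1 : ℝ → ℝ) ⋆₊ u) 0 (Set.Ioi 0) :=
    Measure.eqOn_open_of_ae_eq h isOpen_Ioi (continuousOn_one_causalConv hu) continuousOn_const
  refine ae_restrict_Ioi_of_forall_Ioo fun T hT => ?_
  have hdiff := (locallyIntegrableOn_Ici_iff_intervalIntegrable.1 hu T hT).ae_hasDerivAt_integral
  rw [Set.uIcc_of_le hT.le] at hdiff
  filter_upwards [ae_restrict_of_ae hdiff, ae_restrict_mem measurableSet_Ioo] with t ht htT
  refine (ht (Set.Ioo_subset_Icc_self htT) 0 ⟨le_rfl, hT.le⟩).unique ?_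
  refine (hasDerivAt_const t (0 : ℝ)).congr_of_eventuallyEq ?_
  filter_upwards [Ioi_mem_nhds htT.1] with s hs
  rw [← one_causalConv, hprim hs, Pi.zero_apply]

include hu hv in
lemma ae_eq_of_one_causalConv (h : (1 : ℝ → ℝ) ⋆₊ u =ᵐ[vol₊] (1 : ℝ → ℝ) ⋆₊ v) :
    u =ᵐ[vol₊] v := by
  refine (sub_ae_eq_zero _ _).1 (ae_eq_zero_of_one_causalConv (hu.sub hv) ?_)
  filter_upwards [h, ae_restrict_mem measurableSet_Ioi] with t ht ht₀
  have hu' := locallyIntegrableOn_Ici_iff_intervalIntegrable.1 hu t ht₀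
  have hv' := locallyIntegrableOn_Ici_iff_intervalIntegrable.1 hv t ht₀
  simp only [one_causalConv, Pi.sub_apply, Pi.zero_apply] at ht ⊢
  rw [intervalIntegral.integral_sub hu' hv', ht, sub_self]

include hp in
lemma continuousOn_causalConv (hu : Continuous u) : ContinuousOn (p ⋆₊ u) (Set.Ioi 0) := by
  let P := (Set.Ioi 0).indicator p
  have hPp : P =ᵐ[vol₊] p := Set.eqOn_indicator.aeEq_restrict measurableSet_Ioi
  refine ContinuousOn.congr (fun t ht => ?_) (causalConv_congr_left hPp u).symm
  have hP : IntervalIntegrable P volume (-1) (t + 1) := by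
    rw [intervalIntegrable_iff_integrableOn_Ioo_of_le (by linarith [Set.mem_Ioi.1 ht]),
      integrableOn_indicator_iff measurableSet_Ioi]
    exact (locallyIntegrableOn_Ici_iff.1 hp (t + 1) (by linarith [Set.mem_Ioi.1 ht])).mono_set
      fun s hs => ⟨hs.1, hs.2.2⟩
  obtain ⟨C, hC⟩ := (isCompact_Icc (a := -2) (b := t + 2)).exists_bound_of_continuousOn
    hu.continuousOn
  have hcont := intervalIntegral.continuousAt_parametric_primitive_of_dominated
    (F := fun x s => P s * u (x - s)) (μ := volume) (bound := fun s => ‖P s‖ * C)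
    (-1) (t + 1) (x₀ := t) (a₀ := 0) (b₀ := t) ?_ ?_ (hP.norm.mul_const C)
    (ae_of_all _ fun s => by fun_prop) ⟨by norm_num, by linarith [Set.mem_Ioi.1 ht]⟩
    ⟨by linarith [Set.mem_Ioi.1 ht], lt_add_one t⟩ (measure_singleton t)
  · exact (hcont.comp (f := fun x => (x, x)) (by fun_prop)).continuousWithinAt
  · exact fun x => hP.aestronglyMeasurable_restrict_uIoc.mul (by fun_prop)
  · filter_upwards [Ioo_mem_nhds (sub_one_lt t) (lt_add_one t)] with x hx
    refine (ae_restrict_iff' measurableSet_uIoc).2 (ae_of_all _ fun s hs => ?_)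
    rw [Set.uIoc_of_le (by linarith [Set.mem_Ioi.1 ht])] at hs
    rw [norm_mul]
    gcongr
    exact hC _ ⟨by linarith [hx.1, hs.2], by linarith [hx.2, hs.1]⟩

include hp in
lemma norm_causalConv_le {t T B : ℝ} (ht : t ∈ Set.Icc 0 T) (hB : ∀ s ∈ Set.Icc 0 t, ‖u s‖ ≤ B) :
    ‖(p ⋆₊ u) t‖ ≤ (∫ s in (0 : ℝ)..T, ‖p s‖) * B := by
  have hp' {x : ℝ} (hx : 0 ≤ x) : IntervalIntegrable p volume 0 x :=
    (intervalIntegrable_iff_integrableOn_Icc_of_le hx).2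
      (hp.integrableOn_compact_subset Set.Icc_subset_Ici_self isCompact_Icc)
  calc ‖(p ⋆₊ u) t‖ ≤ ∫ s in (0 : ℝ)..t, ‖p s‖ * B := by
        refine intervalIntegral.norm_integral_le_of_norm_le ht.1 (ae_of_all _ fun s hs => ?_)
          ((hp' ht.1).norm.mul_const B)
        rw [norm_mul]
        gcongr
        exact hB _ ⟨sub_nonneg.2 hs.2, sub_le_self t hs.1.le⟩
    _ = (∫ s in (0 : ℝ)..t, ‖p s‖) * B := intervalIntegral.integral_mul_const _ _
    _ ≤ (∫ s in (0 : ℝ)..T, ‖p s‖) * B := by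
        gcongr
        · exact (norm_nonneg _).trans (hB 0 ⟨le_rfl, ht.1⟩)
        · exact intervalIntegral.integral_mono_interval le_rfl ht.1 ht.2
            (ae_of_all _ fun s => norm_nonneg _) (hp' (ht.1.trans ht.2)).norm

include hp in
lemma hasDerivWithinAt_causalConv_zero (hu : HasDerivAt u 0 0) (hu₀ : u 0 = 0) :
    HasDerivWithinAt (p ⋆₊ u) 0 (Set.Ici 0) 0 := by
  let C := ∫ s in (0 : ℝ)..1, ‖p s‖
  have hC : 0 ≤ C := intervalIntegral.integral_nonneg zero_le_one fun s _ => norm_nonneg _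
  rw [hasDerivWithinAt_iff_isLittleO, Asymptotics.isLittleO_iff]
  intro c hc
  simp only [causalConv_zero_right, smul_zero, sub_zero]
  have hsmall := hu.isLittleO.def (div_pos hc (add_pos_of_nonneg_of_pos hC one_pos))
  simp only [hu₀, sub_zero, smul_zero] at hsmall
  obtain ⟨δ, hδ, hsmall⟩ := Metric.eventually_nhds_iff.1 hsmall
  filter_upwards [Ico_mem_nhdsGE (lt_min hδ one_pos)] with t ht
  have htδ := ht.2.trans_le (min_le_left _ _)
  calc ‖(p ⋆₊ u) t‖ ≤ C * (c / (C + 1) * ‖t‖) := by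
        refine norm_causalConv_le hp ⟨ht.1, ht.2.le.trans (min_le_right _ _)⟩ fun s hs => ?_
        have hst : ‖s‖ ≤ ‖t‖ := by
          rw [Real.norm_of_nonneg hs.1, Real.norm_of_nonneg ht.1]
          exact hs.2
        refine (hsmall ?_).trans (by gcongr)
        rw [dist_zero_right]
        exact hst.trans_lt (by rwa [Real.norm_of_nonneg ht.1])
    _ = C / (C + 1) * (c * ‖t‖) := by ring
    _ ≤ c * ‖t‖ := mul_le_of_le_one_left (by positivity)
        (div_le_one_of_le₀ (le_add_of_nonneg_right zero_le_one) (by positivity))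

end CausalConvolution

/-! ### Riemann–Liouville and Mittag-Leffler kernels -/

section Kernels

/-- The Riemann–Liouville kernel `t^{σ-1} / Γ(σ)`, convolution with which is fractional integration
of order `σ`. -/
noncomputable def rlKernel (σ t : ℝ) : ℝ := t ^ (σ - 1) / Real.Gamma σ

/-- The Mittag-Leffler kernel `t^{μ-1} E_{α,μ}(-a t^α)`, in terms of which the solutions of the
fractional oscillator equation `D^α w + a w = g` are expressed. -/
noncomputable def mlKernel (a α μ t : ℝ) : ℝ := t ^ (μ - 1) * mittagLeffler α μ (-(a * t ^ α))

lemma rlInt_eq_causalConv (σ : ℝ) (u : ℝ → ℝ) : rlInt σ u = rlKernel σ ⋆₊ u := by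
  funext t
  rw [causalConv_comm, causalConv, rlInt, ← intervalIntegral.integral_const_mul]
  refine intervalIntegral.integral_congr fun s _ => ?_
  simp only [rlKernel]
  ring

lemma rlKernel_one : rlKernel 1 = 1 := by
  funext t
  simp [rlKernel]

lemma rlKernel_two : rlKernel 2 = id := by
  funext t
  norm_num [rlKernel]

lemma rlKernel_pos {σ t : ℝ} (hσ : 0 < σ) (ht : 0 < t) : 0 < rlKernel σ t :=
  div_pos (Real.rpow_pos_of_pos ht _) (Real.Gamma_pos_of_pos hσ)

lemma locallyIntegrableOn_rlKernel {σ : ℝ} (hσ : 0 < σ) :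
    LocallyIntegrableOn (rlKernel σ) (Set.Ici 0) :=
  locallyIntegrableOn_Ici_iff_intervalIntegrable.2 fun _ _ =>
    (intervalIntegral.intervalIntegrable_rpow' (by linarith)).div_const _

lemma integral_rpow_mul_sub_rpow {σ τ t : ℝ} (hσ : 0 < σ) (hτ : 0 < τ) (ht : 0 < t) :
    ∫ s in (0 : ℝ)..t, s ^ (σ - 1) * (t - s) ^ (τ - 1) =
      t ^ (σ + τ - 1) * (Real.Gamma σ * Real.Gamma τ / Real.Gamma (σ + τ)) := by
  have h := Complex.betaIntegral_scaled σ τ ht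
  rw [Complex.betaIntegral_eq_Gamma_mul_div (σ : ℂ) τ (by simpa) (by simpa)] at h
  have hint : ∫ s in (0 : ℝ)..t, (s : ℂ) ^ ((σ : ℂ) - 1) * ((t : ℂ) - s) ^ ((τ : ℂ) - 1) =
      ((∫ s in (0 : ℝ)..t, s ^ (σ - 1) * (t - s) ^ (τ - 1) : ℝ) : ℂ) := by
    rw [← intervalIntegral.integral_ofReal]
    refine intervalIntegral.integral_congr fun s hs => ?_
    rw [Set.uIcc_of_le ht.le] at hs
    push_cast [Complex.ofReal_cpow hs.1, Complex.ofReal_cpow (sub_nonneg.2 hs.2)]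
    rfl
  have hpow : (t : ℂ) ^ ((σ : ℂ) + τ - 1) = ((t ^ (σ + τ - 1) : ℝ) : ℂ) := by
    push_cast [Complex.ofReal_cpow ht.le]
    rfl
  rw [hint, hpow, ← Complex.ofReal_add] at h
  simp only [Complex.Gamma_ofReal] at h
  exact_mod_cast h

lemma rlKernel_causalConv_rlKernel {σ τ : ℝ} (hσ : 0 < σ) (hτ : 0 < τ) :
    Set.EqOn (rlKernel σ ⋆₊ rlKernel τ) (rlKernel (σ + τ)) (Set.Ioi 0) := by
  intro t ht
  have hΓσ := (Real.Gamma_pos_of_pos hσ).ne'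
  have hΓτ := (Real.Gamma_pos_of_pos hτ).ne'
  calc ∫ s in (0 : ℝ)..t, rlKernel σ s * rlKernel τ (t - s)
      = (∫ s in (0 : ℝ)..t, s ^ (σ - 1) * (t - s) ^ (τ - 1)) /
          (Real.Gamma σ * Real.Gamma τ) := by
        simp only [rlKernel, div_mul_div_comm, intervalIntegral.integral_div]
    _ = rlKernel (σ + τ) t := by
        rw [integral_rpow_mul_sub_rpow hσ hτ ht, rlKernel]
        field_simp

lemma intervalIntegrable_rlKernel_mul_rlKernel {σ τ t : ℝ} (hσ : 0 < σ) (hτ : 0 < τ)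
    (ht : 0 < t) : IntervalIntegrable (fun s => rlKernel σ s * rlKernel τ (t - s)) volume 0 t :=
  intervalIntegral.intervalIntegrable_of_integral_ne_zero <|
    (rlKernel_causalConv_rlKernel hσ hτ ht).trans_ne (rlKernel_pos (add_pos hσ hτ) ht).ne'

variable {a α μ : ℝ}

lemma mlKernel_nonneg (ha : 0 < a) (hα₁ : 1 ≤ α) (hα₂ : α ≤ 2) (hμ : 3 * (α / 2) ≤ μ) {t : ℝ}
    (ht : 0 < t) : 0 ≤ mlKernel a α μ t :=
  mul_nonneg (Real.rpow_nonneg ht.le _) <|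
    mittagLeffler_neg_nonneg hα₁ hα₂ hμ (mul_pos ha (Real.rpow_pos_of_pos ht _))

lemma continuous_mittagLeffler_comp_rpow (hα : 1 ≤ α) (a μ : ℝ) :
    Continuous fun t : ℝ => mittagLeffler α μ (-(a * t ^ α)) :=
  (continuous_mittagLeffler hα μ).comp
    (continuous_const.mul (Real.continuous_rpow_const (by linarith))).neg

lemma locallyIntegrableOn_mlKernel (hα : 1 ≤ α) (a : ℝ) (hμ : 0 < μ) :
    LocallyIntegrableOn (mlKernel a α μ) (Set.Ici 0) :=
  locallyIntegrableOn_Ici_iff_intervalIntegrable.2 fun _ _ =>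
    (intervalIntegral.intervalIntegrable_rpow' (by linarith)).mul_continuousOn
      (continuous_mittagLeffler_comp_rpow hα a μ).continuousOn

lemma continuousOn_mlKernel (hα : 1 ≤ α) (a μ : ℝ) :
    ContinuousOn (mlKernel a α μ) (Set.Ioi 0) :=
  (continuousOn_id.rpow_const fun _ ht => Or.inl (ne_of_gt ht)).mul
    (continuous_mittagLeffler_comp_rpow hα a μ).continuousOn

lemma hasSum_mlKernel (hα : 1 ≤ α) (a μ : ℝ) {t : ℝ} (ht : 0 < t) :
    HasSum (fun k : ℕ => (-a) ^ k * rlKernel (μ + α * k) t) (mlKernel a α μ t) := by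
  have hterm (k : ℕ) : (-a) ^ k * rlKernel (μ + α * k) t =
      t ^ (μ - 1) * ((-(a * t ^ α)) ^ k / Real.Gamma (μ + α * k)) := by
    rw [rlKernel, show μ + α * k - 1 = (μ - 1) + α * k by ring, Real.rpow_add ht,
      Real.rpow_mul_natCast ht.le]
    ring
  simp only [hterm]
  exact (summable_pow_div_Gamma hα μ (-(a * t ^ α))).hasSum.mul_left (t ^ (μ - 1))

lemma mlKernel_add_smul_mlKernel (hα : 1 ≤ α) (a μ : ℝ) :
    Set.EqOn (mlKernel a α μ + a • mlKernel a α (μ + α)) (rlKernel μ) (Set.Ioi 0) := by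
  intro t ht
  have hpow : t ^ (μ + α - 1) = t ^ (μ - 1) * t ^ α := by
    rw [← Real.rpow_add ht]
    ring_nf
  simp only [Pi.add_apply, Pi.smul_apply, smul_eq_mul, mlKernel, rlKernel, hpow]
  linear_combination t ^ (μ - 1) * mittagLeffler_eq_add_mul hα μ (-(a * t ^ α))

lemma mlKernel_causalConv_rlKernel (hα : 1 ≤ α) (a : ℝ) {σ τ : ℝ} (hσ : 0 < σ) (hτ : 0 < τ) :
    Set.EqOn (mlKernel a α σ ⋆₊ rlKernel τ) (mlKernel a α (σ + τ)) (Set.Ioi 0) := by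
  intro t ht
  have hσk (k : ℕ) : 0 < σ + α * k := by positivity
  let F (k : ℕ) (s : ℝ) : ℝ := (-a) ^ k * (rlKernel (σ + α * k) s * rlKernel τ (t - s))
  have hFint (k : ℕ) : IntegrableOn (F k) (Set.Ioo 0 t) :=
    ((intervalIntegrable_iff_integrableOn_Ioo_of_le (le_of_lt ht)).1
      (intervalIntegrable_rlKernel_mul_rlKernel (hσk k) hτ ht)).const_mul _
  have integral_F (k : ℕ) : ∫ s in Set.Ioo 0 t, rlKernel (σ + α * k) s * rlKernel τ (t - s) =
      rlKernel (σ + τ + α * k) t := by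
    rw [← integral_Ioc_eq_integral_Ioo, ← intervalIntegral.integral_of_le (le_of_lt ht),
      add_right_comm]
    exact rlKernel_causalConv_rlKernel (hσk k) hτ ht
  have hsum := hasSum_mlKernel hα a (σ + τ) ht
  have hnorm : Summable fun k => ∫ s in Set.Ioo 0 t, ‖F k s‖ := by
    refine hsum.summable.norm.congr fun k => ?_
    have hpos : 0 < rlKernel (σ + τ + α * k) t := rlKernel_pos (by positivity) ht
    rw [norm_mul, Real.norm_of_nonneg hpos.le, ← integral_F, ← integral_const_mul]
    refine setIntegral_congr_fun measurableSet_Ioo fun s hs => ?_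
    have hs' := mul_pos (rlKernel_pos (hσk k) hs.1) (rlKernel_pos hτ (sub_pos.2 hs.2))
    simp only [F, norm_mul (_ ^ k), Real.norm_of_nonneg hs'.le]
  have hconv := hasSum_integral_of_summable_integral_norm hFint hnorm
  simp only [F, integral_const_mul, integral_F] at hconv
  rw [hsum.unique hconv, causalConv, intervalIntegral.integral_of_le (le_of_lt ht),
    integral_Ioc_eq_integral_Ioo]
  refine setIntegral_congr_fun measurableSet_Ioo fun s hs => ?_
  simp only [← (hasSum_mlKernel hα a σ hs.1).tsum_eq, ← tsum_mul_right, mul_assoc]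

lemma tendsto_rpow_mul_mlKernel_atTop (ha : 0 < a) (hα₁ : 1 ≤ α) (hα₂ : α < 2) (μ : ℝ) :
    Tendsto (fun t => t ^ (α + 1 - μ) * mlKernel a α μ t) atTop
      (nhds (1 / (a * Real.Gamma (μ - α)))) := by
  have harg : Tendsto (fun t : ℝ => a * t ^ α) atTop atTop :=
    (tendsto_rpow_atTop (by linarith)).const_mul_atTop ha
  have h := ((tendsto_mul_mittagLeffler_neg_atTop hα₁ hα₂ μ).comp harg).const_mul a⁻¹
  rw [← one_div, one_div_mul_one_div] at h
  refine h.congr' ?_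
  filter_upwards [eventually_gt_atTop 0] with t ht
  have hpow : t ^ (α + 1 - μ) * t ^ (μ - 1) = t ^ α := by
    rw [← Real.rpow_add ht]
    ring_nf
  rw [mlKernel, ← mul_assoc, hpow, Function.comp_apply]
  field_simp

end Kernels

/-! ### The fractional oscillator equation -/

section Oscillator

variable {a α β γ c d : ℝ} {f g h u v w : ℝ → ℝ}

lemma capKernel_eq_causalConv (hα : α < 2) (w : ℝ → ℝ) :
    capKernel α w = rlKernel (2 - α) ⋆₊ fun s => w s - deriv w 0 * s - w 0 := by
  rw [capKernel, if_neg hα.ne, rlInt_eq_causalConv]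

lemma deriv_capKernel_zero (hα : α < 2) (hw : DifferentiableAt ℝ w 0)
    (hcap : DifferentiableAt ℝ (capKernel α w) 0) : deriv (capKernel α w) 0 = 0 := by
  have hv : HasDerivAt (fun s => w s - deriv w 0 * s - w 0) 0 0 := by
    simpa using (hw.hasDerivAt.sub ((hasDerivAt_id 0).const_mul (deriv w 0))).sub_const (w 0)
  have hconv := hasDerivWithinAt_causalConv_zero
    (locallyIntegrableOn_rlKernel (sub_pos.2 hα)) hv (by simp)
  rw [← capKernel_eq_causalConv hα] at hconv
  exact (uniqueDiffWithinAt_Ici 0).eq_deriv _ hcap.hasDerivAt.hasDerivWithinAt hconv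

lemma locallyIntegrableOn_deriv_deriv_of_AC2On (hg : ∀ T > 0, AC2On g T) :
    LocallyIntegrableOn (deriv (deriv g)) (Set.Ici 0) :=
  locallyIntegrableOn_Ici_iff_intervalIntegrable.2 fun T hT => (hg T hT).2.1

lemma ae_eq_rlKernel_two_causalConv_of_AC2On (hg : ∀ T > 0, AC2On g T) (hg₀ : g 0 = 0)
    (hg₀' : deriv g 0 = 0) : g =ᵐ[vol₊] rlKernel 2 ⋆₊ deriv (deriv g) := by
  have hg'' := locallyIntegrableOn_deriv_deriv_of_AC2On hg
  have h1 : LocallyIntegrableOn (1 : ℝ → ℝ) (Set.Ici 0) := locallyIntegrableOn_const 1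
  have hderiv : deriv g =ᵐ[vol₊] (1 : ℝ → ℝ) ⋆₊ deriv (deriv g) :=
    ae_restrict_of_forall_mem measurableSet_Ioi fun t ht => by
      rw [one_causalConv, (hg t ht).2.2 t ⟨le_of_lt ht, le_rfl⟩, hg₀', zero_add]
  have hg' := locallyIntegrableOn_Ici_iff_intervalIntegrable.1 <|
    locallyIntegrableOn_Ici_congr_ae (locallyIntegrableOn_causalConv h1 hg'') hderiv.symm
  have hprim : g =ᵐ[vol₊] (1 : ℝ → ℝ) ⋆₊ deriv g :=
    ae_restrict_of_forall_mem measurableSet_Ioi fun t ht => by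
      have hdiff : ∀ s ∈ Set.uIcc 0 t, DifferentiableAt ℝ g s := by
        rw [Set.uIcc_of_le (Set.mem_Ioi.1 ht).le]
        exact (hg t ht).1
      rw [one_causalConv, intervalIntegral.integral_deriv_eq_sub hdiff (hg' t ht), hg₀, sub_zero]
  have hone : (1 : ℝ → ℝ) ⋆₊ 1 =ᵐ[vol₊] rlKernel 2 :=
    ae_restrict_of_forall_mem measurableSet_Ioi fun t _ => by
      simp [one_causalConv, rlKernel_two]
  calc g =ᵐ[vol₊] (1 : ℝ → ℝ) ⋆₊ deriv g := hprim
    _ =ᵐ[vol₊] (1 : ℝ → ℝ) ⋆₊ ((1 : ℝ → ℝ) ⋆₊ deriv (deriv g)) :=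
        (causalConv_congr_right 1 hderiv).aeEq_restrict measurableSet_Ioi
    _ =ᵐ[vol₊] (1 : ℝ → ℝ) ⋆₊ 1 ⋆₊ deriv (deriv g) := (causalConv_assoc h1 h1 hg'').symm
    _ =ᵐ[vol₊] rlKernel 2 ⋆₊ deriv (deriv g) :=
        (causalConv_congr_left hone _).aeEq_restrict measurableSet_Ioi

lemma mlKernel_causalConv_rlKernel_causalConv (hα : 1 ≤ α) (a : ℝ) {σ τ : ℝ} (hσ : 0 < σ)
    (hτ : 0 < τ) (hu : LocallyIntegrableOn u (Set.Ici 0)) :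
    mlKernel a α σ ⋆₊ (rlKernel τ ⋆₊ u) =ᵐ[vol₊] mlKernel a α (σ + τ) ⋆₊ u :=
  calc mlKernel a α σ ⋆₊ (rlKernel τ ⋆₊ u)
      =ᵐ[vol₊] mlKernel a α σ ⋆₊ rlKernel τ ⋆₊ u :=
        (causalConv_assoc (locallyIntegrableOn_mlKernel hα a hσ) (locallyIntegrableOn_rlKernel hτ)
          hu).symm
    _ =ᵐ[vol₊] mlKernel a α (σ + τ) ⋆₊ u :=
        (causalConv_congr_left ((mlKernel_causalConv_rlKernel hα a hσ hτ).aeEq_restrict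
          measurableSet_Ioi) u).aeEq_restrict measurableSet_Ioi

lemma one_causalConv_mlKernel_causalConv (hα : 1 ≤ α) (a : ℝ) {σ : ℝ} (hσ : 0 < σ)
    (hu : LocallyIntegrableOn u (Set.Ici 0)) :
    (1 : ℝ → ℝ) ⋆₊ (mlKernel a α σ ⋆₊ u) =ᵐ[vol₊] mlKernel a α (σ + 1) ⋆₊ u :=
  calc (1 : ℝ → ℝ) ⋆₊ (mlKernel a α σ ⋆₊ u)
      =ᵐ[vol₊] (1 : ℝ → ℝ) ⋆₊ mlKernel a α σ ⋆₊ u :=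
        (causalConv_assoc (locallyIntegrableOn_const 1) (locallyIntegrableOn_mlKernel hα a hσ)
          hu).symm
    _ = mlKernel a α σ ⋆₊ rlKernel 1 ⋆₊ u := by rw [rlKernel_one, causalConv_comm 1]
    _ =ᵐ[vol₊] mlKernel a α (σ + 1) ⋆₊ u :=
        (causalConv_congr_left ((mlKernel_causalConv_rlKernel hα a hσ one_pos).aeEq_restrict
          measurableSet_Ioi) u).aeEq_restrict measurableSet_Ioi

lemma mlKernel_causalConv_ae_eq_of_rlKernel (hα₁ : 1 < α) (hα₂ : α < 2) (hβ : 0 < β) (a : ℝ)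
    (hv : LocallyIntegrableOn v (Set.Ici 0)) (hh : LocallyIntegrableOn h (Set.Ici 0))
    (hvh : rlKernel (2 - α) ⋆₊ v =ᵐ[vol₊] rlKernel 2 ⋆₊ h) :
    mlKernel a α β ⋆₊ v =ᵐ[vol₊] mlKernel a α (α + β) ⋆₊ h := by
  have hα₀ : 0 < α + β - 1 := by linarith
  have hα₃ : 0 < α + β := by linarith
  refine ae_eq_of_one_causalConv
    (locallyIntegrableOn_causalConv (locallyIntegrableOn_mlKernel hα₁.le a hβ) hv)
    (locallyIntegrableOn_causalConv (locallyIntegrableOn_mlKernel hα₁.le a hα₃) hh) ?_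
  calc (1 : ℝ → ℝ) ⋆₊ (mlKernel a α β ⋆₊ v)
      =ᵐ[vol₊] mlKernel a α (β + 1) ⋆₊ v := one_causalConv_mlKernel_causalConv hα₁.le a hβ hv
    _ = mlKernel a α (α + β - 1 + (2 - α)) ⋆₊ v := by ring_nf
    _ =ᵐ[vol₊] mlKernel a α (α + β - 1) ⋆₊ (rlKernel (2 - α) ⋆₊ v) :=
        (mlKernel_causalConv_rlKernel_causalConv hα₁.le a hα₀ (sub_pos.2 hα₂) hv).symm
    _ =ᵐ[vol₊] mlKernel a α (α + β - 1) ⋆₊ (rlKernel 2 ⋆₊ h) :=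
        (causalConv_congr_right _ hvh).aeEq_restrict measurableSet_Ioi
    _ =ᵐ[vol₊] mlKernel a α (α + β - 1 + 2) ⋆₊ h :=
        mlKernel_causalConv_rlKernel_causalConv hα₁.le a hα₀ two_pos hh
    _ = mlKernel a α (α + β + 1) ⋆₊ h := by ring_nf
    _ =ᵐ[vol₊] (1 : ℝ → ℝ) ⋆₊ (mlKernel a α (α + β) ⋆₊ h) :=
        (one_causalConv_mlKernel_causalConv hα₁.le a hα₃ hh).symm

lemma mlKernel_causalConv_add_smul (hα : 1 ≤ α) (hβ : 0 < β) (a : ℝ)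
    (hw : LocallyIntegrableOn w (Set.Ici 0)) :
    mlKernel a α β ⋆₊ w + a • (mlKernel a α (α + β) ⋆₊ w) =ᵐ[vol₊] rlKernel β ⋆₊ w := by
  have hr := locallyIntegrableOn_mlKernel hα a hβ
  have hr' := locallyIntegrableOn_mlKernel hα a (by linarith : 0 < β + α)
  calc mlKernel a α β ⋆₊ w + a • (mlKernel a α (α + β) ⋆₊ w)
      = w ⋆₊ mlKernel a α β + w ⋆₊ (a • mlKernel a α (β + α)) := by
        rw [causalConv_smul, add_comm α, causalConv_comm w, causalConv_comm w]
    _ =ᵐ[vol₊] w ⋆₊ (mlKernel a α β + a • mlKernel a α (β + α)) :=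
        (causalConv_add hw hr (hr'.smul a)).symm
    _ =ᵐ[vol₊] w ⋆₊ rlKernel β :=
        (causalConv_congr_right w ((mlKernel_add_smul_mlKernel hα a β).aeEq_restrict
          measurableSet_Ioi)).aeEq_restrict measurableSet_Ioi
    _ = rlKernel β ⋆₊ w := causalConv_comm _ _

lemma mlKernel_causalConv_add_affine (hα : 1 ≤ α) (hβ : 0 < β) (a c d : ℝ)
    (hv : LocallyIntegrableOn v (Set.Ici 0)) :
    mlKernel a α β ⋆₊ (v + d • rlKernel 2 + c • rlKernel 1) =ᵐ[vol₊]
      mlKernel a α β ⋆₊ v + d • mlKernel a α (β + 2) + c • mlKernel a α (β + 1) := by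
  have hr := locallyIntegrableOn_mlKernel hα a hβ
  have hk₂ := (locallyIntegrableOn_rlKernel two_pos).smul d
  have hk₁ := (locallyIntegrableOn_rlKernel one_pos).smul c
  filter_upwards [causalConv_add hr (hv.add hk₂) hk₁, causalConv_add hr hv hk₂,
    ae_restrict_mem measurableSet_Ioi] with t h₁ h₂ ht
  rw [h₁, Pi.add_apply, h₂]
  simp only [causalConv_smul, Pi.add_apply, Pi.smul_apply,
    mlKernel_causalConv_rlKernel hα a hβ two_pos ht,
    mlKernel_causalConv_rlKernel hα a hβ one_pos ht]

lemma rlKernel_causalConv_ae_eq_of_oscillator (hα₁ : 1 < α) (hα₂ : α < 2) (hβ : 0 < β)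
    (hv : LocallyIntegrableOn v (Set.Ici 0)) (hh : LocallyIntegrableOn h (Set.Ici 0))
    (hvh : rlKernel (2 - α) ⋆₊ v =ᵐ[vol₊] rlKernel 2 ⋆₊ h)
    (hw : w = v + d • rlKernel 2 + c • rlKernel 1) (heq : h + a • w =ᵐ[vol₊] g) :
    rlKernel β ⋆₊ w =ᵐ[vol₊]
      d • mlKernel a α (β + 2) + c • mlKernel a α (β + 1) + mlKernel a α (α + β) ⋆₊ g := by
  have hwint : LocallyIntegrableOn w (Set.Ici 0) :=
    hw ▸ (hv.add ((locallyIntegrableOn_rlKernel two_pos).smul d)).add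
      ((locallyIntegrableOn_rlKernel one_pos).smul c)
  have hr := locallyIntegrableOn_mlKernel hα₁.le a (by linarith : 0 < α + β)
  have haffine := mlKernel_causalConv_add_affine hα₁.le hβ a c d hv
  rw [← hw] at haffine
  filter_upwards [mlKernel_causalConv_add_smul hα₁.le hβ a hwint, haffine,
    mlKernel_causalConv_ae_eq_of_rlKernel hα₁ hα₂ hβ a hv hh hvh,
    causalConv_add hr hh (hwint.smul a),
    ae_restrict_of_forall_mem measurableSet_Ioi (causalConv_congr_right (mlKernel a α (α + β)) heq)]
    with t hres haff hvh' hadd heq'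
  simp only [causalConv_smul, Pi.add_apply, Pi.smul_apply, smul_eq_mul] at *
  linarith

lemma le_rlKernel_causalConv_of_oscillator (ha : 0 < a) (hα₁ : 1 < α) (hα₂ : α < 2) (hβ : 0 < β)
    (hγ : 0 < γ) (hβγ : α / 2 ≤ γ + β) (hf : LocallyIntegrableOn f (Set.Ici 0))
    (hf₀ : 0 ≤ᵐ[vol₊] f) (hh : LocallyIntegrableOn h (Set.Ici 0)) (hw : Continuous w)
    (hwh : rlKernel (2 - α) ⋆₊ (fun s => w s - d * s - c) =ᵐ[vol₊] rlKernel 2 ⋆₊ h)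
    (heq : h + a • w =ᵐ[vol₊] rlKernel γ ⋆₊ f) {t : ℝ} (ht : 0 < t) :
    d * mlKernel a α (β + 2) t + c * mlKernel a α (β + 1) t ≤ (rlKernel β ⋆₊ w) t := by
  let free := d • mlKernel a α (β + 2) + c • mlKernel a α (β + 1)
  have hfree : ContinuousOn free (Set.Ioi 0) :=
    ((continuousOn_mlKernel hα₁.le a _).const_smul d).add
      ((continuousOn_mlKernel hα₁.le a _).const_smul c)
  have hkw : ContinuousOn (rlKernel β ⋆₊ w) (Set.Ioi 0) :=
    continuousOn_causalConv (locallyIntegrableOn_rlKernel hβ) hw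
  have hv : Continuous fun s => w s - d * s - c := by fun_prop
  have hsplit : w = (fun s => w s - d * s - c) + d • rlKernel 2 + c • rlKernel 1 := by
    funext s
    simp only [Pi.add_apply, Pi.smul_apply, rlKernel_one, rlKernel_two, Pi.one_apply, id,
      smul_eq_mul]
    ring
  have hae : free ⊓ (rlKernel β ⋆₊ w) =ᵐ[vol₊] free := by
    filter_upwards [rlKernel_causalConv_ae_eq_of_oscillator (c := c) (d := d) hα₁ hα₂ hβ
      (hv.locallyIntegrable.locallyIntegrableOn _) hh hwh hsplit heq,
      mlKernel_causalConv_rlKernel_causalConv hα₁.le a (by linarith : 0 < α + β) hγ hf,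
      ae_restrict_mem measurableSet_Ioi] with s hsol hshift hs
    have hforced : 0 ≤ (mlKernel a α (α + β + γ) ⋆₊ f) s :=
      causalConv_nonneg (fun r hr => mlKernel_nonneg ha hα₁.le hα₂.le (by linarith) hr) hf₀ hs
    rw [Pi.inf_apply, inf_eq_left, hsol, Pi.add_apply, hshift]
    exact le_add_of_nonneg_right hforced
  exact inf_eq_left.1 (Measure.eqOn_open_of_ae_eq hae isOpen_Ioi (hfree.inf hkw) hfree ht)

lemma tendsto_rpow_mul_free_atTop (ha : 0 < a) (hα₁ : 1 ≤ α) (hα₂ : α < 2) (β c d : ℝ) :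
    Tendsto (fun t => t ^ (α - β - 1) *
      (d * mlKernel a α (β + 2) t + c * mlKernel a α (β + 1) t)) atTop
      (nhds (d / (a * Real.Gamma (2 + β - α)))) := by
  have h₂ := (tendsto_rpow_mul_mlKernel_atTop ha hα₁ hα₂ (β + 2)).const_mul d
  have h₁ := (tendsto_inv_atTop_zero.mul
    (tendsto_rpow_mul_mlKernel_atTop ha hα₁ hα₂ (β + 1))).const_mul c
  have hadd := h₂.add h₁
  rw [zero_mul, mul_zero, add_zero, mul_one_div, add_comm β 2] at hadd
  refine hadd.congr' ?_
  filter_upwards [eventually_gt_atTop 0] with t ht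
  have hpow : t ^ (α + 1 - (β + 1)) = t ^ (α - β - 1) * t := by
    rw [← Real.rpow_add_one ht.ne']
    ring_nf
  rw [hpow, show α + 1 - (2 + β) = α - β - 1 by ring, add_comm 2 β]
  field_simp

end Oscillator

theorem liminf_pos_vii_general {a α β γ : ℝ} {f w : ℝ → ℝ} (ha : 0 < a) (hα₁ : 1 < α)
    (hα₂ : α < 2) (hβ : 0 < β) (hγ : 0 < γ) (hβγ : α / 2 ≤ γ + β)
    (hf : ∀ T > 0, IntervalIntegrable f volume 0 T)
    (hf₀ : ∀ᵐ t ∂volume.restrict (Set.Ici 0), 0 ≤ f t) (hw : Continuous w)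
    (hw₀ : DifferentiableAt ℝ w 0) (hAC : ∀ T > 0, AC2On (capKernel α w) T)
    (heq : ∀ᵐ t ∂volume.restrict (Set.Ici 0), caputoD α w t + a * w t = rlInt γ f t) :
    ((deriv w 0 / (a * Real.Gamma (2 + β - α)) : ℝ) : EReal) ≤
      liminf (fun t : ℝ => ((t ^ (α - β - 1) * rlInt β w t : ℝ) : EReal)) atTop := by
  have hcap := capKernel_eq_causalConv hα₂ w
  have hcap₀ : capKernel α w 0 = 0 := by rw [hcap, causalConv_zero_right]
  have hcap₀' := deriv_capKernel_zero hα₂ hw₀ ((hAC 1 one_pos).1 0 (Set.left_mem_Icc.2 zero_le_one))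
  have hrep := ae_eq_rlKernel_two_causalConv_of_AC2On hAC hcap₀ hcap₀'
  have hlow {t : ℝ} (ht : 0 < t) : deriv w 0 * mlKernel a α (β + 2) t +
      w 0 * mlKernel a α (β + 1) t ≤ rlInt β w t := by
    rw [← Measure.restrict_congr_set Ioi_ae_eq_Ici] at hf₀ heq
    rw [rlInt_eq_causalConv]
    rw [rlInt_eq_causalConv] at heq
    exact le_rlKernel_causalConv_of_oscillator ha hα₁ hα₂ hβ hγ hβγ
      (locallyIntegrableOn_Ici_iff_intervalIntegrable.2 hf) hf₀
      (locallyIntegrableOn_deriv_deriv_of_AC2On hAC) hw (hcap ▸ hrep) heq ht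
  have hfree := tendsto_rpow_mul_free_atTop ha hα₁.le hα₂ β (w 0) (deriv w 0)
  rw [← ((continuous_coe_real_ereal.tendsto _).comp hfree).liminf_eq]
  refine liminf_le_liminf ?_
  filter_upwards [eventually_gt_atTop 0] with t ht
  exact EReal.coe_le_coe_iff.2 (mul_le_mul_of_nonneg_left (hlow ht) (Real.rpow_nonneg ht.le _))

/-- Lemma 2.3 (vii): for 0 < γ < α/2, α+γ ≤ 2 and w'(0) > 0, for every β with α/2 ≤ γ+β < 1 and 0 < β < α, liminf t^{α−β−1} (₀I_t^β w)(t) > 0. -/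
theorem liminf_pos_vii
    (γ α p a b : ℝ) (f w : ℝ → ℝ)
    (hγ : 0 < γ) (hα1 : 1 < α) (hα2 : α < 2) (hp : 1 < p) (ha : 0 < a) (hb : 0 < b)
    (hf : ∀ T > (0:ℝ), IntervalIntegrable f volume 0 T)
    (hw : ContDiff ℝ 1 w)
    (hw0 : ∃ t : ℝ, 0 ≤ t ∧ w t ≠ 0)
    (hAC : ∀ T > (0:ℝ), AC2On (capKernel α w) T)
    (heq : ∀ᵐ t ∂(volume.restrict (Set.Ici (0:ℝ))),
      caputoD α w t + a * w t = rlInt γ f t ∧ f t ≥ b * |w t| ^ p)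
    (hγα : γ < α / 2) (hαγ : α + γ ≤ 2) (hw' : 0 < deriv w 0) :
    ∀ β : ℝ, α / 2 ≤ γ + β → γ + β < 1 → 0 < β → β < α →
      0 < liminf (fun t : ℝ => ((t ^ (α - β - 1) * rlInt β w t : ℝ) : EReal)) atTop := by
  intro β hβγ _ hβ _
  have hlimit : 0 < deriv w 0 / (a * Real.Gamma (2 + β - α)) :=
    div_pos hw' (mul_pos ha (Real.Gamma_pos_of_pos (by linarith)))
  have hf₀ : ∀ᵐ t ∂volume.restrict (Set.Ici 0), 0 ≤ f t :=
    heq.mono fun t ht => (by positivity : 0 ≤ b * |w t| ^ p).trans ht.2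
  exact (EReal.coe_pos.2 hlimit).trans_le <| liminf_pos_vii_general ha hα1 hα2 hβ hγ hβγ hf hf₀
    hw.continuous (hw.differentiable one_ne_zero 0) hAC (heq.mono fun _ ht => ht.1)
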